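/- Let 𝔸 be a relational structure that admits a chain of n Hagemann–Mitschke terms as polymorphisms and has bounded pathwidth duality (equivalently, CSP(𝔸) is decided by some linear Datalog program). Then there exists M ∈ ℕ such that 𝒫_𝔸^M decides CSP(𝔸): for every instance I of CSP(𝔸), 𝒫_𝔸^M(I) ⊢ G if and only if I is unsatisfiable. -/

import Mathlib

namespace CSPPaper

/-- A relational structure on `A`: a family of finitary relations (the basic
relations), a relation of arity `n` being a set of `n`-tuples `Fin n → A`. -/
structure RelStruct (A : Type) where
  basic : Set (Σ n : ℕ, Set (Fin n → A))

/-- A CSP instance with variables `V` over domain `A`: a set of constraints,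
each consisting of a scope (a tuple of variables) and a constraint relation. -/
structure Instance (A : Type) (V : Type) where
  constraints : Set (Σ n : ℕ, (Fin n → V) × Set (Fin n → A))

/-- `f : V → A` is a solution of the instance `I`. -/
def Instance.Sol {A V : Type} (I : Instance A V) (f : V → A) : Prop :=
  ∀ c ∈ I.constraints, (fun i => f (c.2.1 i)) ∈ c.2.2

def Instance.Satisfiable {A V : Type} (I : Instance A V) : Prop :=
  ∃ f, I.Sol f

/-- `I` is an instance of `CSP(𝔸)`: all its constraint relations are basic
relations of `𝔸`. -/
def IsCSPInstance {A V : Type} (𝔸 : RelStruct A) (I : Instance A V) : Prop :=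
  ∀ c ∈ I.constraints, (⟨c.1, c.2.2⟩ : Σ n : ℕ, Set (Fin n → A)) ∈ 𝔸.basic

/-- An atom of a Datalog rule over the variable set `Fin r`: a predicate
(a relation on `A`) applied to a tuple of variables. -/
structure Atom (A : Type) (r : ℕ) where
  arity : ℕ
  scope : Fin arity → Fin r
  rel : Set (Fin arity → A)

def Atom.holds {A : Type} {r : ℕ} (a : Atom A r) (f : Fin r → A) : Prop :=
  (fun i => f (a.scope i)) ∈ a.rel

/-- A rule of the `r`-ary maximal symmetric Datalog program `𝒫_𝔸^r` consistent
with `𝔸`: a linear Datalog rule on at most `r` variables, whose head is an IDB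
(an arbitrary relation on `A` of arity at most `r`), whose body contains at most
one IDB atom (`idb`) and otherwise non-IDB atoms for basic relations of `𝔸`
of arity at most `r` (`edb`, without repetition), such that the rule is
consistent with `𝔸`, and, if the body contains an IDB atom, its mirror image is
also consistent with `𝔸`. -/
structure Rule (A : Type) (𝔸 : RelStruct A) (r : ℕ) where
  head : Atom A r
  idb : Option (Atom A r)
  edb : List (Atom A r)
  head_arity : head.arity ≤ r
  idb_arity : ∀ a ∈ idb, a.arity ≤ r
  edb_arity : ∀ a ∈ edb, a.arity ≤ r
  edb_basic : ∀ a ∈ edb, (⟨a.arity, a.rel⟩ : Σ n : ℕ, Set (Fin n → A)) ∈ 𝔸.basic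
  nodup : edb.Nodup
  consistent : ∀ f : Fin r → A,
    (∀ a ∈ idb, a.holds f) → (∀ a ∈ edb, a.holds f) → head.holds f
  mirror : ∀ a ∈ idb, ∀ f : Fin r → A,
    head.holds f → (∀ b ∈ edb, b.holds f) → a.holds f

/-- `Derives 𝔸 r I ρ R`: the `r`-ary maximal symmetric Datalog program
`𝒫_𝔸^r` consistent with `𝔸`, run on the instance `I`, derives `R(ρ)`.
This holds if `(ρ, R)` is a constraint of `I`, or if some rule of `𝒫_𝔸^r`
with head `R(τ)` admits an evaluation `ω` of its variables into `V` with
`ω ∘ τ = ρ`, whose (at most one) IDB body atom is derived and whose non-IDB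
body atoms are constraints of `I` under `ω`. -/
inductive Derives {A V : Type} (𝔸 : RelStruct A) (r : ℕ) (I : Instance A V) :
    ∀ {n : ℕ}, (Fin n → V) → Set (Fin n → A) → Prop
  | base {n : ℕ} (ρ : Fin n → V) (R : Set (Fin n → A)) :
      (⟨n, ρ, R⟩ : Σ n : ℕ, (Fin n → V) × Set (Fin n → A)) ∈ I.constraints →
      Derives 𝔸 r I ρ R
  | step (rule : Rule A 𝔸 r) (ω : Fin r → V) :
      (∀ a ∈ rule.idb, Derives 𝔸 r I (fun i => ω (a.scope i)) a.rel) →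
      (∀ a ∈ rule.edb,
        (⟨a.arity, fun i => ω (a.scope i), a.rel⟩ :
          Σ n : ℕ, (Fin n → V) × Set (Fin n → A)) ∈ I.constraints) →
      Derives 𝔸 r I (fun i => ω (rule.head.scope i)) rule.head.rel

/-- `𝒫_𝔸^r(I) ⊢ G`: the program derives a goal predicate, i.e. an empty
relation of arity at most `r`. -/
def DerivesGoal {A V : Type} (𝔸 : RelStruct A) (r : ℕ) (I : Instance A V) : Prop :=
  ∃ (n : ℕ) (ρ : Fin n → V), n ≤ r ∧ Derives 𝔸 r I ρ (∅ : Set (Fin n → A))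

/-- `𝒫_𝔸^r(I) ⊢ J`: the program run on `I` derives every constraint of `J`. -/
def DerivesInstance {A V : Type} (𝔸 : RelStruct A) (r : ℕ) (I J : Instance A V) : Prop :=
  ∀ c ∈ J.constraints, Derives 𝔸 r I c.2.1 c.2.2

/-- An `m`-ary operation `t` preserves the `n`-ary relation `R`. -/
def PreservesRel {A : Type} {m n : ℕ} (t : (Fin m → A) → A) (R : Set (Fin n → A)) : Prop :=
  ∀ rows : Fin m → Fin n → A, (∀ j, rows j ∈ R) → (fun i => t (fun j => rows j i)) ∈ R

/-- A polymorphism of `𝔸`: an operation preserving all basic relations. -/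
def IsPolymorphism {A : Type} {m : ℕ} (𝔸 : RelStruct A) (t : (Fin m → A) → A) : Prop :=
  ∀ R ∈ 𝔸.basic, PreservesRel t R.2

def ternaryOp {A : Type} (p : A → A → A → A) : (Fin 3 → A) → A :=
  fun v => p (v 0) (v 1) (v 2)

/-- A chain of `n` Hagemann–Mitschke terms: idempotent ternary operations
`p 0, …, p n` with `p 0 x y z = x`, `p k x x y = p (k+1) x y y`, `p n x y z = z`. -/
def IsHMChain {A : Type} (n : ℕ) (p : ℕ → A → A → A → A) : Prop :=
  (∀ k ≤ n, ∀ x : A, p k x x x = x) ∧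
  (∀ x y z : A, p 0 x y z = x) ∧
  (∀ x y z : A, p n x y z = z) ∧
  (∀ k < n, ∀ x y : A, p k x x y = p (k + 1) x y y)

def Pres3Set {A : Type} (p : A → A → A → A) (S : Set A) : Prop :=
  ∀ x y z, x ∈ S → y ∈ S → z ∈ S → p x y z ∈ S

def Pres3Rel {A : Type} (p : A → A → A → A) (E : Set (A × A)) : Prop :=
  ∀ u v w, u ∈ E → v ∈ E → w ∈ E → (p u.1 v.1 w.1, p u.2 v.2 w.2) ∈ E

def PresOpSet {A : Type} {m : ℕ} (t : (Fin m → A) → A) (S : Set A) : Prop :=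
  ∀ x : Fin m → A, (∀ j, x j ∈ S) → t x ∈ S

def PresOpRel {A : Type} {m : ℕ} (t : (Fin m → A) → A) (E : Set (A × A)) : Prop :=
  ∀ x y : Fin m → A, (∀ j, (x j, y j) ∈ E) → (t x, t y) ∈ E

/-- A path instance of length `len`: variables `1, …, len`, one unary
constraint `B i` on each variable `i ∈ [1, len]`, and one binary constraint
`E i` with scope `(i, i+1)` for each `i ∈ [1, len-1]`. -/
structure PathInstance (A : Type) where
  len : ℕ
  B : ℕ → Set A
  E : ℕ → Set (A × A)

/-- A solution of the subinstance of the path instance `I` induced by `[a, b]`. -/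
def IsSolutionOn {A : Type} (I : PathInstance A) (a b : ℕ) (s : ℕ → A) : Prop :=
  (∀ i, a ≤ i → i ≤ b → s i ∈ I.B i) ∧
  (∀ i, a ≤ i → i + 1 ≤ b → (s i, s (i + 1)) ∈ I.E i)

def IsSolution {A : Type} (I : PathInstance A) (s : ℕ → A) : Prop :=
  IsSolutionOn I 1 I.len s

def unaryRel {A : Type} (S : Set A) : Set (Fin 1 → A) := {f | f 0 ∈ S}

def pairRel {A : Type} (E : Set (A × A)) : Set (Fin 2 → A) := {f | (f 0, f 1) ∈ E}

/-- The path instance `I`, presented as a CSP instance on the variable set `ℕ`. -/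
def PathInstance.toInstance {A : Type} (I : PathInstance A) : Instance A ℕ where
  constraints :=
    {c | (∃ i, 1 ≤ i ∧ i ≤ I.len ∧
            c = ⟨1, fun _ => i, unaryRel (I.B i)⟩) ∨
         (∃ i, 1 ≤ i ∧ i + 1 ≤ I.len ∧
            c = ⟨2, ![i, i + 1], pairRel (I.E i)⟩)}

/-- An `n`-braid in the path instance `I`: solutions `s 0, …, s n` and indices
`1 ≤ idx 1 < … < idx n ≤ I.len` with `s k (idx k) = s (k+1) (idx k)` and
`s (k-1) (idx (k+1)) = s k (idx (k+1))` for `k = 1, …, n-1`. -/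
def IsBraid {A : Type} (I : PathInstance A) (n : ℕ) (s : ℕ → ℕ → A) (idx : ℕ → ℕ) : Prop :=
  (∀ k ≤ n, IsSolution I (s k)) ∧
  1 ≤ idx 1 ∧ idx n ≤ I.len ∧
  (∀ k, 1 ≤ k → k < n → idx k < idx (k + 1)) ∧
  (∀ k, 1 ≤ k → k + 1 ≤ n →
    s k (idx k) = s (k + 1) (idx k) ∧ s (k - 1) (idx (k + 1)) = s k (idx (k + 1)))

/-- The binary constraint of `I` with scope `(i, i+1)` is subdirect. -/
def SubdirectAt {A : Type} (I : PathInstance A) (i : ℕ) : Prop :=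
  (I.B i).Nonempty ∧ (I.B (i + 1)).Nonempty ∧
  (∀ a ∈ I.B i, ∃ b ∈ I.B (i + 1), (a, b) ∈ I.E i) ∧
  (∀ b ∈ I.B (i + 1), ∃ a ∈ I.B i, (a, b) ∈ I.E i)

/-- The subinstance of `I` induced by `[a, b]` is subdirect. -/
def SubdirectOn {A : Type} (I : PathInstance A) (a b : ℕ) : Prop :=
  ∀ i, a ≤ i → i + 1 ≤ b → SubdirectAt I i

def Subdirect {A : Type} (I : PathInstance A) : Prop := SubdirectOn I 1 I.len

/-- The sets `C_i`: `C 1 = B 1` and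
`C (i+1) = {b ∈ B (i+1) | ∃ c ∈ C i, (c, b) ∈ E i}`. -/
def reachSet {A : Type} (I : PathInstance A) : ℕ → Set A
  | 0 => ∅
  | 1 => I.B 1
  | (i + 2) => {b ∈ I.B (i + 2) | ∃ c ∈ reachSet I (i + 1), (c, b) ∈ I.E (i + 1)}

/-- `B_{i,i+1}` contains a backward edge: an edge `(b, c) ∈ E i` with
`b ∈ B i \ C i` and `c ∈ C (i+1)`. -/
def BackwardAt {A : Type} (I : PathInstance A) (i : ℕ) : Prop :=
  1 ≤ i ∧ i + 1 ≤ I.len ∧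
  ∃ b c, (b, c) ∈ I.E i ∧ b ∈ I.B i ∧ b ∉ reachSet I i ∧ c ∈ reachSet I (i + 1)

/-- Adjacency in the graph `Conn(I_{[lo,hi]})`: its vertices are pairs `(i, a)`
with `a ∈ B i`, `lo ≤ i ≤ hi`, and `(i, a)` is adjacent to `(i+1, b)` whenever
`(a, b) ∈ E i`. -/
def connAdj {A : Type} (I : PathInstance A) (lo hi : ℕ) (p q : ℕ × A) : Prop :=
  lo ≤ p.1 ∧ p.1 + 1 ≤ hi ∧ q.1 = p.1 + 1 ∧
  p.2 ∈ I.B p.1 ∧ q.2 ∈ I.B q.1 ∧ (p.2, q.2) ∈ I.E p.1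

/-- `λ_{I,lo,hi}`: the pairs `(a, b) ∈ B lo × B hi` joined by an undirected path
in `Conn(I_{[lo,hi]})`. -/
def lamRel {A : Type} (I : PathInstance A) (lo hi : ℕ) : Set (A × A) :=
  {ab | ab.1 ∈ I.B lo ∧ ab.2 ∈ I.B hi ∧
    Relation.ReflTransGen (fun p q => connAdj I lo hi p q ∨ connAdj I lo hi q p)
      (lo, ab.1) (hi, ab.2)}

open Classical in
/-- The variable set `U` of the instance `I_λ`: the variables `1`, `len`, and
`i, i+1` for every index `i` such that `B_{i,i+1}` has a backward edge. -/
noncomputable def lamVars {A : Type} (I : PathInstance A) : Finset ℕ :=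
  (Finset.Icc 1 I.len).filter
    (fun v => v = 1 ∨ v = I.len ∨ BackwardAt I v ∨ (2 ≤ v ∧ BackwardAt I (v - 1)))

/-- The `t`-th smallest element of `U` (`1`-indexed). -/
noncomputable def lamEnum {A : Type} (I : PathInstance A) (t : ℕ) : ℕ :=
  ((lamVars I).sort (· ≤ ·)).getD (t - 1) 0

/-- The instance `I_λ`, presented as a path instance whose `t`-th variable is
the `t`-th smallest element of `U`: it consists of the subinstance of `I`
induced by `U`, where each gap between consecutive elements `u < w` of `U` with
`w > u + 1` is filled by the binary constraint `λ_{I,u,w}`. -/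
noncomputable def lamInst {A : Type} (I : PathInstance A) : PathInstance A where
  len := (lamVars I).card
  B := fun t => I.B (lamEnum I t)
  E := fun t =>
    if lamEnum I (t + 1) = lamEnum I t + 1 then I.E (lamEnum I t)
    else lamRel I (lamEnum I t) (lamEnum I (t + 1))

/-- Unpacking an `m`-tuple of elements of `V^k` into an `m*k`-tuple of
elements of `V`. -/
def unpackTuple {X : Type} {m k : ℕ} (σ : Fin m → Fin k → X) : Fin (m * k) → X :=
  fun t => σ t.divNat t.modNat

/-- Unpacking an `m`-ary relation on `A^k` into an `m*k`-ary relation on `A`. -/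
def unpackRel {A : Type} {m k : ℕ} (U : Set (Fin m → Fin k → A)) :
    Set (Fin (m * k) → A) :=
  {t | ∃ u ∈ U, ∀ i : Fin (m * k), t i = u i.divNat i.modNat}

/-- The instance `I` has pathwidth at most `p`. -/
def PathwidthLE {A V : Type} (I : Instance A V) (p : ℕ) : Prop :=
  ∃ (m : ℕ) (U : Fin m → Set V),
    (∀ v : V, ∃ i, v ∈ U i) ∧
    (∀ i, (U i).Finite ∧ (U i).ncard ≤ p + 1) ∧
    (∀ i j q : Fin m, i ≤ q → q ≤ j → ∀ v, v ∈ U i → v ∈ U j → v ∈ U q) ∧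
    (∀ c ∈ I.constraints, ∃ i, Set.range c.2.1 ⊆ U i)

/-- `𝔸` has pathwidth duality `p`: for every unsatisfiable instance `I` of
`CSP(𝔸)` there is an unsatisfiable instance `J` of `CSP(𝔸)` of pathwidth at
most `p` such that identifying some variables of `J` (along `h`) yields a
subinstance of `I`. -/
def HasPathwidthDuality {A : Type} (𝔸 : RelStruct A) (p : ℕ) : Prop :=
  ∀ (V : Type) (I : Instance A V), IsCSPInstance 𝔸 I → ¬I.Satisfiable →
    ∃ (W : Type) (J : Instance A W) (h : W → V),
      IsCSPInstance 𝔸 J ∧ ¬J.Satisfiable ∧ PathwidthLE J p ∧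
      ∀ c ∈ J.constraints,
        (⟨c.1, fun i => h (c.2.1 i), c.2.2⟩ :
          Σ n : ℕ, (Fin n → V) × Set (Fin n → A)) ∈ I.constraints

/-- The `k`-th bubble power `𝔸^(k)` of `𝔸`: the relational structure on `A^k`
whose basic relations are all unary relations definable as conjunctions of
basic relations of `𝔸` (with identification of variables and dummy variables,
but no existential quantification), and all binary relations
`E_ℐ = {(a, b) | ∀ (i,j) ∈ ℐ, a i = b j}` for `ℐ ⊆ [k]²`. -/
def bubblePower {A : Type} (𝔸 : RelStruct A) (k : ℕ) : RelStruct (Fin k → A) where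
  basic :=
    {r | (∃ L : Set (Σ n : ℕ, (Fin n → Fin k) × Set (Fin n → A)),
            (∀ c ∈ L, (⟨c.1, c.2.2⟩ : Σ n : ℕ, Set (Fin n → A)) ∈ 𝔸.basic) ∧
            r = ⟨1, {f : Fin 1 → (Fin k → A) |
                      ∀ c ∈ L, (fun i => f 0 (c.2.1 i)) ∈ c.2.2}⟩) ∨
         (∃ Idx : Set (Fin k × Fin k),
            r = ⟨2, {f : Fin 2 → (Fin k → A) | ∀ q ∈ Idx, f 0 q.1 = f 1 q.2}⟩)}


/-! ### Abstract symmetric derivations -/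

/-- `R` depends only on the coordinates in `Z`. -/
def Dep {V A : Type} (Z : Finset V) (R : Set (V → A)) : Prop :=
  ∀ f g : V → A, (∀ v ∈ Z, f v = g v) → f ∈ R → g ∈ R

/-- One symmetric derivation step of width `r`. -/
def SStep {V A : Type} (F : Set (Finset V × Set (V → A))) (r : ℕ) (R S : Set (V → A)) : Prop :=
  ∃ Z : Finset V, Z.card ≤ r ∧ Dep Z R ∧ Dep Z S ∧
    ∀ f, (∀ c ∈ F, c.1 ⊆ Z → f ∈ c.2) → (f ∈ R ↔ f ∈ S)

def Cn {V A : Type} (F : Set (Finset V × Set (V → A))) (r : ℕ) :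
    Set (V → A) → Set (V → A) → Prop := Relation.ReflTransGen (SStep F r)

def Dv {V A : Type} (F : Set (Finset V × Set (V → A))) (r : ℕ) (R : Set (V → A)) : Prop :=
  Cn F r Set.univ R

section Abstract
variable {V A : Type}

lemma Dep.mono {Z Z' : Finset V} {R : Set (V → A)} (h : Dep Z R) (hZ : Z ⊆ Z') : Dep Z' R :=
  fun f g hfg hf => h f g (fun v hv => hfg v (hZ hv)) hf

lemma Dep.inter {Z : Finset V} {R S : Set (V → A)} (h : Dep Z R) (h' : Dep Z S) :
    Dep Z (R ∩ S) :=
  fun f g hfg hf => ⟨h f g hfg hf.1, h' f g hfg hf.2⟩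

lemma Dep.univ (Z : Finset V) : Dep Z (Set.univ : Set (V → A)) := fun _ _ _ _ => trivial

lemma SStep.symm {F : Set (Finset V × Set (V → A))} {r : ℕ} {R S : Set (V → A)}
    (h : SStep F r R S) : SStep F r S R := by
  obtain ⟨Z, h1, h2, h3, h4⟩ := h
  exact ⟨Z, h1, h3, h2, fun f hf => (h4 f hf).symm⟩

lemma Cn.symm {F : Set (Finset V × Set (V → A))} {r : ℕ} {R S : Set (V → A)}
    (h : Cn F r R S) : Cn F r S R :=
  haveI : Std.Symm (SStep F r) := ⟨fun _ _ h => h.symm⟩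
  (Relation.ReflTransGen.stdSymm (r := SStep F r)).symm _ _ h

lemma Cn.mono {F : Set (Finset V × Set (V → A))} {r r' : ℕ} {R S : Set (V → A)}
    (h : Cn F r R S) (hr : r ≤ r') : Cn F r' R S :=
  Relation.ReflTransGen.mono (r := SStep F r) (p := SStep F r')
    (fun _ _ ⟨Z, h1, h2⟩ => ⟨Z, h1.trans hr, h2⟩) _ _ h

lemma Cn.inter [DecidableEq V] {F : Set (Finset V × Set (V → A))} {r s : ℕ} {R S T : Set (V → A)}
    (h : Cn F r R S) {X : Finset V} (hT : Dep X T) (hX : X.card ≤ s) :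
    Cn F (r + s) (T ∩ R) (T ∩ S) := by
  refine Relation.ReflTransGen.lift (fun R => T ∩ R) ?_ _ _ h
  rintro R S ⟨Z, h1, h2, h3, h4⟩
  refine ⟨Z ∪ X, (Finset.card_union_le _ _).trans (by omega), ?_, ?_, ?_⟩
  · exact (hT.mono Finset.subset_union_right).inter (h2.mono Finset.subset_union_left)
  · exact (hT.mono Finset.subset_union_right).inter (h3.mono Finset.subset_union_left)
  · intro f hf
    have := h4 f (fun c hc hcZ => hf c hc (hcZ.trans Finset.subset_union_left))
    simp only [Set.mem_inter_iff, this]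

lemma Dv.weaken [DecidableEq V] {F : Set (Finset V × Set (V → A))} {r s : ℕ} {R S : Set (V → A)}
    (h : Dv F r R) (hRS : R ⊆ S) {Z : Finset V} (hS : Dep Z S) (hZ : Z.card ≤ s) :
    Dv F (r + s) S := by
  have h1 : Cn F (r + s) (S ∩ Set.univ) (S ∩ R) := Cn.inter h hS hZ
  rw [Set.inter_univ, Set.inter_eq_self_of_subset_right hRS] at h1
  exact Relation.ReflTransGen.trans (h.mono (by omega)) h1.symm

lemma Dv.inter [DecidableEq V] {F : Set (Finset V × Set (V → A))} {r r' s : ℕ} {R R' : Set (V → A)}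
    (h : Dv F r R) (h' : Dv F r' R') {Z : Finset V} (hR : Dep Z R) (hZ : Z.card ≤ s) :
    Dv F (max r (r' + s)) (R ∩ R') := by
  have h1 : Cn F (r' + s) (R ∩ Set.univ) (R ∩ R') := Cn.inter h' hR hZ
  rw [Set.inter_univ] at h1
  exact Relation.ReflTransGen.trans (h.mono (le_max_left _ _)) (h1.mono (le_max_right _ _))

lemma Dv.of_local {F : Set (Finset V × Set (V → A))} {r : ℕ} {S : Set (V → A)} (Z : Finset V)
    (hZ : Z.card ≤ r) (hS : Dep Z S)
    (h : ∀ f, (∀ c ∈ F, c.1 ⊆ Z → f ∈ c.2) → f ∈ S) : Dv F r S :=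
  Relation.ReflTransGen.single ⟨Z, hZ, Dep.univ Z, hS, fun f hf => by simp [h f hf]⟩

end Abstract

/-- Stacking and translating derivations. -/
lemma simulate {V A V' A' : Type} [DecidableEq V]
    {F : Set (Finset V × Set (V → A))} {F' : Set (Finset V' × Set (V' → A'))}
    (hfin : F'.Finite) (hdep : ∀ c ∈ F', Dep c.1 c.2)
    (Φ : (V → A) → (V' → A')) (bag : V' → Finset V) (k : ℕ) (hk : ∀ i, (bag i).card ≤ k)
    (hloc : ∀ i f g, (∀ v ∈ bag i, f v = g v) → Φ f i = Φ g i)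
    (r : ℕ) (hd : ∀ c ∈ F', Dv F r (Φ ⁻¹' c.2)) {s : ℕ} {R S : Set (V' → A')}
    (h : Cn F' s R S) : Cn F (r + k * s) (Φ ⁻¹' R) (Φ ⁻¹' S) := by
  have key : ∀ R S, SStep F' s R S → Cn F (r + k * s) (Φ ⁻¹' R) (Φ ⁻¹' S) := by
    rintro R S ⟨Z', h1, h2, h3, h4⟩
    set Z := Z'.biUnion bag with hZ
    have hZc : Z.card ≤ k * s :=
      (Finset.card_biUnion_le_card_mul _ _ k (fun i _ => hk i)).trans (by nlinarith)
    have hpull : ∀ T : Set (V' → A'), Dep Z' T → Dep Z (Φ ⁻¹' T) := by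
      intro T hT f g hfg hf
      refine hT _ _ (fun i hi => hloc i f g (fun v hv => hfg v ?_)) hf
      exact Finset.mem_biUnion.2 ⟨i, hi, hv⟩
    have hG : ∀ G : Set (Finset V' × Set (V' → A')), G.Finite → G ⊆ {c ∈ F' | c.1 ⊆ Z'} →
        ∀ T : Set (V → A), Dep Z T →
          Cn F (r + k * s) T (T ∩ {f | ∀ c ∈ G, Φ f ∈ c.2}) := by
      intro G hGf
      induction G, hGf using Set.Finite.induction_on with
      | empty =>
        intro _ T _
        have : T ∩ {f | ∀ c ∈ (∅ : Set (Finset V' × Set (V' → A'))), Φ f ∈ c.2} = T := by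
          ext; simp
        rw [this]
        exact Relation.ReflTransGen.refl
      | @insert c G _ _ ih =>
        intro hsub T hT
        have hc := hsub (Set.mem_insert _ _)
        have h5 : Cn F (r + k * s) (T ∩ Set.univ) (T ∩ (Φ ⁻¹' c.2)) :=
          Cn.inter (hd c hc.1) hT hZc
        rw [Set.inter_univ] at h5
        have h6 := ih (fun x hx => hsub (Set.mem_insert_of_mem _ hx)) (T ∩ (Φ ⁻¹' c.2))
          (hT.inter (hpull _ (Dep.mono (hdep c hc.1) hc.2)))
        refine Relation.ReflTransGen.trans h5 ?_
        have h7 : T ∩ {f | ∀ c' ∈ insert c G, Φ f ∈ c'.2} =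
            T ∩ (Φ ⁻¹' c.2) ∩ {f | ∀ c' ∈ G, Φ f ∈ c'.2} := by
          ext f
          simp only [Set.mem_inter_iff, Set.mem_ofPred_eq, Set.mem_insert_iff, Set.mem_preimage,
            forall_eq_or_imp, and_assoc]
        rw [h7]
        exact h6
    have hG0 : {c ∈ F' | c.1 ⊆ Z'}.Finite := hfin.subset (Set.sep_subset _ _)
    have hR := hG _ hG0 subset_rfl _ (hpull R h2)
    have hS := hG _ hG0 subset_rfl _ (hpull S h3)
    refine Relation.ReflTransGen.trans hR ?_
    refine Relation.ReflTransGen.trans ?_ hS.symm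
    have : Φ ⁻¹' R ∩ {f | ∀ c ∈ {c ∈ F' | c.1 ⊆ Z'}, Φ f ∈ c.2} =
        Φ ⁻¹' S ∩ {f | ∀ c ∈ {c ∈ F' | c.1 ⊆ Z'}, Φ f ∈ c.2} := by
      ext f
      simp only [Set.mem_inter_iff, Set.mem_preimage, Set.mem_ofPred_eq, and_congr_left_iff]
      intro hf
      exact h4 _ (fun c hc hcZ => hf c ⟨hc, hcZ⟩)
    rw [this]
  induction h with
  | refl => exact Relation.ReflTransGen.refl
  | tail _ h2 ih => exact Relation.ReflTransGen.trans ih (key _ _ h2)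

/-! ### Ramsey -/

lemma endhom (κ : Type) [Finite κ] (m : ℕ) : ∃ N : ℕ, ∀ (c : ℕ → ℕ → κ) (S : Finset ℕ),
    N ≤ S.card → ∃ T ⊆ S, T.card = m ∧ ∃ g : ℕ → κ, ∀ a ∈ T, ∀ b ∈ T, a < b → c a b = g a := by
  classical
  have := Fintype.ofFinite κ
  induction m with
  | zero =>
    refine ⟨1, fun c S hS => ⟨∅, by simp, by simp, ?_⟩⟩
    exact ⟨fun a => c a a, by simp⟩
  | succ m ih =>
    obtain ⟨N, hN⟩ := ih
    refine ⟨Fintype.card κ * N + 2, fun c S hS => ?_⟩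
    have hne : S.Nonempty := Finset.card_pos.1 (by omega)
    set a := S.min' hne with ha
    have haS : a ∈ S := S.min'_mem hne
    have hc : (S.erase a).card = S.card - 1 := Finset.card_erase_of_mem haS
    obtain ⟨y, -, hy⟩ := Finset.exists_lt_card_fiber_of_mul_lt_card_of_maps_to
      (s := S.erase a) (t := (Finset.univ : Finset κ)) (f := fun b => c a b) (n := N)
      (by simp) (by rw [Finset.card_univ]; omega)
    obtain ⟨T, hT, hTc, g, hg⟩ := hN c _ hy.le
    have hlt : ∀ b ∈ T, a < b ∧ b ∈ S ∧ c a b = y := by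
      intro b hb
      have := hT hb
      simp only [Finset.mem_filter, Finset.mem_erase] at this
      exact ⟨lt_of_le_of_ne (S.min'_le b this.1.2) (Ne.symm this.1.1), this.1.2, this.2⟩
    have haT : a ∉ T := fun h => lt_irrefl _ (hlt a h).1
    refine ⟨insert a T, ?_, by rw [Finset.card_insert_of_notMem haT, hTc],
      fun x => if x = a then y else g x, ?_⟩
    · intro x hx
      rcases Finset.mem_insert.1 hx with rfl | hx
      · exact haS
      · exact (hlt x hx).2.1
    · intro x hx z hz hxz
      rcases Finset.mem_insert.1 hx with rfl | hx
      · rcases Finset.mem_insert.1 hz with rfl | hz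
        · exact absurd hxz (lt_irrefl _)
        · simp [(hlt z hz).2.2]
      · have hxa := (hlt x hx).1
        rcases Finset.mem_insert.1 hz with rfl | hz
        · omega
        · simp only [if_neg hxa.ne']
          exact hg x hx z hz hxz

lemma ramsey_pairs (κ : Type) [Finite κ] (m : ℕ) : ∃ N : ℕ, ∀ (c : ℕ → ℕ → κ) (S : Finset ℕ),
    N ≤ S.card → ∃ (h : ℕ → ℕ) (y : κ), (∀ i < m, h i ∈ S) ∧
      (∀ i j, i < j → j < m → h i < h j) ∧ (∀ i j, i < j → j < m → c (h i) (h j) = y) := by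
  classical
  have := Fintype.ofFinite κ
  obtain ⟨N, hN⟩ := endhom κ (Fintype.card κ * m + 1)
  refine ⟨N, fun c S hS => ?_⟩
  obtain ⟨T, hT, hTc, g, hg⟩ := hN c S hS
  obtain ⟨y, -, hy⟩ := Finset.exists_lt_card_fiber_of_mul_lt_card_of_maps_to
      (s := T) (t := (Finset.univ : Finset κ)) (f := g) (n := m)
      (by simp) (by rw [Finset.card_univ]; omega)
  obtain ⟨T', hT', hT'c⟩ := Finset.exists_subset_card_eq hy.le
  have hmem : ∀ x ∈ T', x ∈ T ∧ g x = y := fun x hx => by simpa using hT' hx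
  have hin : ∀ i (hi : i < m), T'.orderEmbOfFin hT'c ⟨i, hi⟩ ∈ T' := fun i hi =>
    Finset.orderEmbOfFin_mem _ _ _
  have hmono : ∀ i j (hj : j < m) (hij : i < j),
      T'.orderEmbOfFin hT'c ⟨i, hij.trans hj⟩ < T'.orderEmbOfFin hT'c ⟨j, hj⟩ := by
    intro i j hj hij
    exact (T'.orderEmbOfFin hT'c).strictMono (by simpa using hij)
  refine ⟨fun i => if hi : i < m then T'.orderEmbOfFin hT'c ⟨i, hi⟩ else 0, y, ?_, ?_, ?_⟩
  · intro i hi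
    simp only [hi, dif_pos]
    exact hT (hmem _ (hin i hi)).1
  · intro i j hij hj
    simp only [hj, hij.trans hj, dif_pos]
    exact hmono i j hj hij
  · intro i j hij hj
    simp only [hj, hij.trans hj, dif_pos]
    rw [hg _ (hmem _ (hin i (hij.trans hj))).1 _ (hmem _ (hin j hj)).1 (hmono i j hj hij)]
    exact (hmem _ (hin i (hij.trans hj))).2

/-! ### Path instances -/

def pathSys {X : Type} (L : ℕ) (E : ℕ → Set (X × X)) : Set (Finset ℕ × Set (ℕ → X)) :=
  {c | ∃ i < L, c = ({i, i + 1}, {s | (s i, s (i + 1)) ∈ E i})}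

def reach {X : Type} (E : ℕ → Set (X × X)) : ℕ → Set X
  | 0 => Set.univ
  | i + 1 => {b | ∃ c ∈ reach E i, (c, b) ∈ E i}

def IsBack {X : Type} (E : ℕ → Set (X × X)) (e : ℕ) : Prop :=
  ∃ b c, (b, c) ∈ E e ∧ b ∉ reach E e ∧ c ∈ reach E (e + 1)

def PSol {X : Type} (E : ℕ → Set (X × X)) (u v : ℕ) (s : ℕ → X) : Prop :=
  ∀ i, u ≤ i → i < v → (s i, s (i + 1)) ∈ E i

structure Stretch {X : Type} (B : ℕ → Set X) (E : ℕ → Set (X × X)) (l r : ℕ) : Prop where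
  sub : ∀ i, l ≤ i → i < r → ∀ x ∈ E i, x.1 ∈ B i ∧ x.2 ∈ B (i + 1)
  pred : ∀ i, l ≤ i → i < r → ∀ b ∈ B (i + 1), ∃ a, (a, b) ∈ E i
  succ : ∀ i, l ≤ i → i < r → ∀ a ∈ B i, ∃ b, (a, b) ∈ E i

section Path
variable {X : Type} {B : ℕ → Set X} {E : ℕ → Set (X × X)} {l r : ℕ}

lemma PSol.snoc {u v : ℕ} {s : ℕ → X} (hs : PSol E u v s) {b : X} (hb : (s v, b) ∈ E v) :
    PSol E u (v + 1) (Function.update s (v + 1) b) := by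
  intro i hi hi'
  rcases Nat.lt_succ_iff_lt_or_eq.1 hi' with h | rfl
  · rw [Function.update_of_ne (by omega), Function.update_of_ne (by omega)]
    exact hs i hi h
  · rw [Function.update_of_ne (by omega), Function.update_self]
    exact hb

lemma PSol.glue {u v w : ℕ} {s t : ℕ → X} (hs : PSol E u v s) (ht : PSol E v w t)
    (h : s v = t v) : PSol E u w (fun i => if i ≤ v then s i else t i) := by
  intro i hi hi'
  rcases lt_trichotomy i v with h1 | rfl | h1
  · simp only [h1.le, Nat.succ_le_of_lt h1, if_true]
    exact hs i hi h1
  · simp only [le_refl, if_true, Nat.not_succ_le_self, if_false, h]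
    exact ht _ le_rfl hi'
  · have : ¬ i ≤ v := by omega
    have h2 : ¬ i + 1 ≤ v := by omega
    simp only [this, h2, if_false]
    exact ht _ h1.le hi'

lemma PSol.mem_reach {u v : ℕ} {s : ℕ → X} (hs : PSol E u v s) (h : s u ∈ reach E u) :
    ∀ i, u ≤ i → i ≤ v → s i ∈ reach E i := by
  intro i hi
  induction i, hi using Nat.le_induction with
  | base => intro _; exact h
  | succ i hi ih => intro hv; exact ⟨s i, ih (by omega), hs i hi (by omega)⟩

lemma PSol.mem_reach_back {u v : ℕ} {s : ℕ → X} (hs : PSol E u v s)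
    (hb : ∀ e, u ≤ e → e < v → ¬ IsBack E e) (huv : u ≤ v) (h : s v ∈ reach E v) :
    s u ∈ reach E u := by
  by_contra hu
  have : ∀ i, u ≤ i → i ≤ v → s i ∉ reach E i := by
    intro i hi
    induction i, hi using Nat.le_induction with
    | base => intro _; exact hu
    | succ i hi ih =>
      intro hv h'
      exact hb i hi (by omega) ⟨_, _, hs i hi (by omega), ih (by omega), h'⟩
  exact this v huv le_rfl h

lemma Stretch.left (H : Stretch B E l r) {u : ℕ} (hlu : l ≤ u) :
    ∀ v, u ≤ v → v ≤ r → ∀ b ∈ B v, ∃ s : ℕ → X, s v = b ∧ PSol E u v s := by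
  intro v hv
  induction v, hv using Nat.le_induction with
  | base => intro _ b _; exact ⟨fun _ => b, rfl, fun i hi hi' => by omega⟩
  | succ v hv ih =>
    intro hr b hb
    obtain ⟨a, ha⟩ := H.pred v (by omega) (by omega) b hb
    obtain ⟨s, hs, hs'⟩ := ih (by omega) a (H.sub v (by omega) (by omega) _ ha).1
    exact ⟨_, Function.update_self _ _ _, hs'.snoc (by rw [hs]; exact ha)⟩

lemma Stretch.right (H : Stretch B E l r) {u : ℕ} (hlu : l ≤ u) {b : X} (hb : b ∈ B u) :
    ∀ v, u ≤ v → v ≤ r → ∃ s : ℕ → X, s u = b ∧ s v ∈ B v ∧ PSol E u v s := by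
  intro v hv
  induction v, hv using Nat.le_induction with
  | base => intro _; exact ⟨fun _ => b, rfl, hb, fun i hi hi' => by omega⟩
  | succ v hv ih =>
    intro hr
    obtain ⟨s, hs, hsB, hs'⟩ := ih (by omega)
    obtain ⟨c, hc⟩ := H.succ v (by omega) (by omega) _ hsB
    refine ⟨_, ?_, ?_, hs'.snoc hc⟩
    · rw [Function.update_of_ne (by omega), hs]
    · rw [Function.update_self]
      exact (H.sub v (by omega) (by omega) _ hc).2

lemma Stretch.through (H : Stretch B E l r) {e : ℕ} (hl : l ≤ e) (hr : e < r)
    {b c : X} (hbc : (b, c) ∈ E e) :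
    ∃ s : ℕ → X, s e = b ∧ s (e + 1) = c ∧ PSol E l r s := by
  obtain ⟨hb, hc⟩ := H.sub e hl hr _ hbc
  obtain ⟨s, hs, hs'⟩ := H.left le_rfl e hl hr.le b hb
  obtain ⟨t, ht, -, ht'⟩ := H.right (u := e + 1) (by omega) hc r (by omega) le_rfl
  have h1 := hs'.snoc (b := c) (by rw [hs]; exact hbc)
  refine ⟨_, ?_, ?_, h1.glue ht' (by rw [Function.update_self, ht])⟩
  · simp [hs]
  · simp

lemma exists_code {S : Set X} {D : ℕ} (hS : S.Finite) (hD : S.ncard ≤ D) :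
    ∃ ι : X → Fin (D + 1), Set.InjOn ι S := by
  classical
  have hc : hS.toFinset.card ≤ D := by rwa [← Set.ncard_eq_toFinset_card S hS]
  let e := hS.toFinset.equivFin
  refine ⟨fun x => if hx : x ∈ hS.toFinset then ⟨(e ⟨x, hx⟩ : ℕ), by
    have := (e ⟨x, hx⟩).2; omega⟩ else 0, ?_⟩
  intro x hx y hy hxy
  have hx' : x ∈ hS.toFinset := by simpa using hx
  have hy' : y ∈ hS.toFinset := by simpa using hy
  simp only [hx', hy', dif_pos, Fin.mk.injEq] at hxy
  have := e.injective (Fin.ext hxy)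
  simpa using this

end Path

lemma few_back (n D : ℕ) : ∃ N : ℕ, ∀ (X : Type) (p : ℕ → X → X → X → X) (_ : IsHMChain n p)
    (B : ℕ → Set X) (E : ℕ → Set (X × X)) (l r : ℕ) (_ : Stretch B E l r)
    (_ : ∀ i, l ≤ i → i ≤ r → (B i).Finite ∧ (B i).ncard ≤ D)
    (_ : ∀ i, l ≤ i → i < r → ∀ k ≤ n, Pres3Rel (p k) (E i))
    (S : Finset ℕ) (_ : ∀ e ∈ S, l ≤ e ∧ e < r ∧ IsBack E e), S.card < N := by
  obtain ⟨N, hN⟩ := ramsey_pairs (Fin (D + 1) × Fin (D + 1)) (2 * n + 6)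
  refine ⟨N, ?_⟩
  intro X p hp B E l r H hB hinv S hS
  by_contra hcard
  push Not at hcard
  -- the solutions passing through the backward edges
  have hex : ∀ e, ∃ s : ℕ → X, e ∈ S →
      s e ∉ reach E e ∧ s (e + 1) ∈ reach E (e + 1) ∧ PSol E l r s := by
    intro e
    by_cases he : e ∈ S
    · obtain ⟨h1, h2, b, c, hbc, hb, hc⟩ := hS e he
      obtain ⟨s, hs, hs', hs''⟩ := H.through h1 h2 hbc
      exact ⟨s, fun _ => ⟨by rwa [hs], by rwa [hs'], hs''⟩⟩
    · by_cases hX : Nonempty X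
      · exact ⟨fun _ => hX.some, fun h => absurd h he⟩
      · exfalso
        obtain ⟨h, y, h1, -⟩ := hN (fun _ _ => 0) S hcard
        exact hX ⟨(hS _ (h1 0 (by omega))).2.2.choose⟩
  choose f hf using hex
  have hcode : ∀ i, ∃ ι : X → Fin (D + 1), l ≤ i → i ≤ r → Set.InjOn ι (B i) := by
    intro i
    by_cases hi : l ≤ i ∧ i ≤ r
    · obtain ⟨ι, hι⟩ := exists_code (hB i hi.1 hi.2).1 (hB i hi.1 hi.2).2
      exact ⟨ι, fun _ _ => hι⟩
    · exact ⟨fun _ => 0, fun h1 h2 => absurd ⟨h1, h2⟩ hi⟩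
  choose ι hι using hcode
  obtain ⟨h, ⟨y1, y2⟩, hhS, hmono, hcol⟩ :=
    hN (fun a b => (ι a (f b a), ι b (f a b))) S hcard
  simp only [Prod.mk.injEq] at hcol
  have hfB : ∀ a ∈ S, ∀ b ∈ S, f a b ∈ B b := by
    intro a ha b hb
    obtain ⟨h1, h2, -⟩ := hS b hb
    exact (H.sub b h1 h2 _ ((hf a ha).2.2 b h1 h2)).1
  have hout : ∀ a ∈ S, ∀ b ∈ S, a < b → f b a ∉ reach E a := by
    intro a ha b hb hab hmem
    have h1 := ((hf b hb).2.2)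
    refine (hf b hb).1 (PSol.mem_reach (u := a) (v := r) (fun i hi hi' => h1 i ?_ hi') hmem b
      hab.le (hS b hb).2.1.le)
    exact (hS a ha).1.trans hi
  have hinn : ∀ a ∈ S, ∀ b ∈ S, a < b → f a b ∈ reach E b := by
    intro a ha b hb hab
    have h1 := ((hf a ha).2.2)
    refine (PSol.mem_reach (u := a + 1) (v := r) (fun i hi hi' => h1 i ?_ hi') (hf a ha).2.1 b
      hab (hS b hb).2.1.le)
    have := (hS a ha).1
    omega
  -- the braid
  set g : ℕ → ℕ → X := fun k => f (h (2 * k + 1)) with hg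
  set y : ℕ → ℕ := fun k => h (2 * k) with hy
  have eqout : ∀ k i j, k ≤ i → k ≤ j → i ≤ n + 2 → j ≤ n + 2 → g i (y k) = g j (y k) := by
    intro k i j hi hj hin hjn
    have hk := hS _ (hhS (2 * k) (by omega))
    refine hι (y k) hk.1 hk.2.1.le (hfB _ (hhS _ (by omega)) _ (hhS _ (by omega)))
      (hfB _ (hhS _ (by omega)) _ (hhS _ (by omega))) ?_
    rw [(hcol (2 * k) (2 * i + 1) (by omega) (by omega)).1,
      (hcol (2 * k) (2 * j + 1) (by omega) (by omega)).1]
  have eqinn : ∀ k i j, i < k → j < k → k ≤ n + 2 → g i (y k) = g j (y k) := by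
    intro k i j hi hj hkn
    have hk := hS _ (hhS (2 * k) (by omega))
    refine hι (y k) hk.1 hk.2.1.le (hfB _ (hhS _ (by omega)) _ (hhS _ (by omega)))
      (hfB _ (hhS _ (by omega)) _ (hhS _ (by omega))) ?_
    rw [(hcol (2 * i + 1) (2 * k) (by omega) (by omega)).2,
      (hcol (2 * j + 1) (2 * k) (by omega) (by omega)).2]
  obtain ⟨-, hp0, hpn, hpk⟩ := hp
  have hsol : ∀ k ≤ n, PSol E l r (fun i => p k (g k i) (g (k + 1) i) (g (k + 2) i)) := by
    intro k hk i hi hi'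
    exact hinv i hi hi' k hk _ _ _ ((hf _ (hhS (2 * k + 1) (by omega))).2.2 i hi hi')
      ((hf _ (hhS (2 * (k + 1) + 1) (by omega))).2.2 i hi hi')
      ((hf _ (hhS (2 * (k + 2) + 1) (by omega))).2.2 i hi hi')
  have hstep : ∀ k ≤ n, p k (g k (y (k + 1))) (g (k + 1) (y (k + 1))) (g (k + 2) (y (k + 1)))
        ∈ reach E (y (k + 1)) →
      p k (g k (y (k + 2))) (g (k + 1) (y (k + 2))) (g (k + 2) (y (k + 2)))
        ∈ reach E (y (k + 2)) := by
    intro k hk hmem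
    have h1 := hS _ (hhS (2 * (k + 1)) (by omega))
    have h2 := hS _ (hhS (2 * (k + 2)) (by omega))
    refine PSol.mem_reach (u := y (k + 1)) (v := r)
      (fun i hi hi' => hsol k hk i (h1.1.trans hi) hi') hmem (y (k + 2)) ?_ h2.2.1.le
    exact (hmono _ _ (by omega) (by omega)).le
  have hall : ∀ k ≤ n, p k (g k (y (k + 2))) (g (k + 1) (y (k + 2))) (g (k + 2) (y (k + 2)))
        ∈ reach E (y (k + 2)) := by
    intro k
    induction k with
    | zero =>
      intro hk
      apply hstep 0 hk
      rw [hp0]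
      exact hinn _ (hhS _ (by omega)) _ (hhS _ (by omega)) (hmono _ _ (by omega) (by omega))
    | succ k ih =>
      intro hk
      apply hstep (k + 1) hk
      have h1 := ih (by omega)
      rw [eqinn (k + 2) (k + 1) k (by omega) (by omega) (by omega), hpk k (by omega)] at h1
      have e1 : g (k + 1) (y (k + 2)) = g k (y (k + 2)) :=
        eqinn (k + 2) (k + 1) k (by omega) (by omega) (by omega)
      have e2 : g (k + 3) (y (k + 2)) = g (k + 2) (y (k + 2)) :=
        eqout (k + 2) (k + 3) (k + 2) (by omega) (by omega) (by omega) (by omega)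
      show p (k + 1) (g (k + 1) (y (k + 2))) (g (k + 2) (y (k + 2))) (g (k + 3) (y (k + 2)))
        ∈ reach E (y (k + 2))
      rw [e1, e2]
      exact h1
  have hfinal := hall n le_rfl
  rw [hpn] at hfinal
  exact hout _ (hhS (2 * (n + 2)) (by omega)) _ (hhS (2 * (n + 2) + 1) (by omega))
    (hmono _ _ (by omega) (by omega)) hfinal

/-! ### The relations `λ` -/

/-- `σ`-zigzag closure. -/
def theta {X : Type} (σ : Set (X × X)) (x y : X) : Prop := ∃ z, (x, z) ∈ σ ∧ (y, z) ∈ σ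

def sig {X : Type} (E : ℕ → Set (X × X)) (u v : ℕ) : Set (X × X) :=
  {x | ∃ s : ℕ → X, s u = x.1 ∧ s v = x.2 ∧ PSol E u v s}

def tau {X : Type} (E : ℕ → Set (X × X)) (u v i : ℕ) : Set (X × X) :=
  {x | ∃ a, Relation.ReflTransGen (theta (sig E u v)) x.1 a ∧ (a, x.2) ∈ sig E u i}

section Lam
variable {X : Type}

lemma theta_star_pres {p : X → X → X → X} {σ : Set (X × X)} (hσ : Pres3Rel p σ)
    {a b c a' b' c' : X} (ha : theta σ a' a') (hb : theta σ b' b') (hc : theta σ c' c')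
    (h1 : Relation.ReflTransGen (theta σ) a a') (h2 : Relation.ReflTransGen (theta σ) b b')
    (h3 : Relation.ReflTransGen (theta σ) c c') :
    Relation.ReflTransGen (theta σ) (p a b c) (p a' b' c') := by
  have hθ : ∀ x y z x' y' z', theta σ x x' → theta σ y y' → theta σ z z' →
      theta σ (p x y z) (p x' y' z') := by
    rintro x y z x' y' z' ⟨u, hu, hu'⟩ ⟨v, hv, hv'⟩ ⟨w, hw, hw'⟩
    exact ⟨p u v w, hσ _ _ _ hu hv hw, hσ _ _ _ hu' hv' hw'⟩
  have hr : ∀ x y, Relation.ReflTransGen (theta σ) x y → theta σ y y → theta σ x x := by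
    intro x y hxy hy
    rcases Relation.ReflTransGen.cases_head hxy with rfl | ⟨z, ⟨w, hw, _⟩, _⟩
    · exact hy
    · exact ⟨w, hw, hw⟩
  have hb0 := hr _ _ h2 hb
  have hc0 := hr _ _ h3 hc
  have s1 : Relation.ReflTransGen (theta σ) (p a b c) (p a' b c) :=
    Relation.ReflTransGen.lift (fun x => p x b c) (fun x y h => hθ _ _ _ _ _ _ h hb0 hc0) _ _ h1
  have s2 : Relation.ReflTransGen (theta σ) (p a' b c) (p a' b' c) :=
    Relation.ReflTransGen.lift (fun x => p a' x c) (fun x y h => hθ _ _ _ _ _ _ ha h hc0) _ _ h2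
  have s3 : Relation.ReflTransGen (theta σ) (p a' b' c) (p a' b' c') :=
    Relation.ReflTransGen.lift (fun x => p a' b' x) (fun x y h => hθ _ _ _ _ _ _ ha hb h) _ _ h3
  exact (s1.trans s2).trans s3

lemma sig_pres {p : X → X → X → X} {E : ℕ → Set (X × X)} {u v : ℕ}
    (h : ∀ i, u ≤ i → i < v → Pres3Rel p (E i)) : Pres3Rel p (sig E u v) := by
  rintro x y z ⟨s, hs1, hs2, hs⟩ ⟨t, ht1, ht2, ht⟩ ⟨w, hw1, hw2, hw⟩
  refine ⟨fun i => p (s i) (t i) (w i), by simp [hs1, ht1, hw1], by simp [hs2, ht2, hw2], ?_⟩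
  intro i hi hi'
  exact h i hi hi' _ _ _ (hs i hi hi') (ht i hi hi') (hw i hi hi')

lemma tau_pres {p : X → X → X → X} {E : ℕ → Set (X × X)} {u v : ℕ}
    (h : ∀ i, u ≤ i → i < v → Pres3Rel p (E i)) : Pres3Rel p (tau E u v v) := by
  have hs := sig_pres h
  rintro x y z ⟨a, ha, ha'⟩ ⟨b, hb, hb'⟩ ⟨c, hc, hc'⟩
  exact ⟨p a b c, theta_star_pres hs ⟨_, ha', ha'⟩ ⟨_, hb', hb'⟩ ⟨_, hc', hc'⟩ ha hb hc,
    hs _ _ _ ha' hb' hc'⟩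

lemma dep_pair (T : Set (X × X)) (u v : ℕ) :
    Dep ({u, v} : Finset ℕ) {s : ℕ → X | (s u, s v) ∈ T} := by
  intro f g hfg hf
  have h1 := hfg u (by simp)
  have h2 := hfg v (by simp)
  simp only [Set.mem_ofPred_eq] at hf ⊢
  rwa [← h1, ← h2]

lemma tau_derive {B : ℕ → Set X} {E : ℕ → Set (X × X)} {l r L u v : ℕ} (H : Stretch B E l r)
    (hrL : r ≤ L) (hlu : l ≤ u) (hvr : v ≤ r) :
    ∀ i, u ≤ i → i ≤ v → Dv (pathSys L E) 3 {s : ℕ → X | (s u, s i) ∈ tau E u v i} := by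
  intro i hi
  induction i, hi using Nat.le_induction with
  | base =>
    intro _
    have : {s : ℕ → X | (s u, s u) ∈ tau E u v u} = Set.univ := by
      ext s
      simp only [Set.mem_ofPred_eq, Set.mem_univ, iff_true]
      exact ⟨s u, Relation.ReflTransGen.refl, s, rfl, rfl, fun i hi hi' => by omega⟩
    rw [this]
    exact Relation.ReflTransGen.refl
  | succ i hi ih =>
    intro hiv
    refine Relation.ReflTransGen.tail (ih (by omega)) ?_
    refine ⟨{u, i, i + 1}, Finset.card_le_three, ?_, ?_, ?_⟩
    · exact (dep_pair _ u i).mono (by intro x; simp; tauto)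
    · exact (dep_pair _ u (i + 1)).mono (by intro x; simp; tauto)
    · intro s hs
      have hE : (s i, s (i + 1)) ∈ E i :=
        hs ({i, i + 1}, {s | (s i, s (i + 1)) ∈ E i}) ⟨i, by omega, rfl⟩
          (by intro x; simp; tauto)
      constructor
      · rintro ⟨a, ha, t, ht1, ht2, ht⟩
        simp only at ht1 ht2
        refine ⟨a, ha, _, ?_, ?_, ht.snoc (b := s (i + 1)) (by rw [ht2]; exact hE)⟩
        · rw [Function.update_of_ne (by omega), ht1]
        · rw [Function.update_self]
      · rintro ⟨a, ha, t, ht1, ht2, ht⟩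
        simp only at ht1 ht2
        obtain ⟨hbi, hci⟩ := H.sub i (by omega) (by omega) _ hE
        obtain ⟨q, hq, hq'⟩ := H.left hlu i hi (by omega) _ hbi
        obtain ⟨w, hw, -, hw'⟩ := H.right (u := i + 1) (by omega) hci v (by omega) (by omega)
        have hq2 := hq'.snoc (b := s (i + 1)) (by rw [hq]; exact hE)
        refine ⟨q u, ha.tail ?_, q, rfl, hq, hq'⟩
        by_cases hvi : v = i + 1
        · subst hvi
          refine ⟨s (i + 1), ⟨t, ht1, ht2, ht⟩, ⟨_, ?_, ?_, hq2⟩⟩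
          · rw [Function.update_of_ne (by omega)]
          · rw [Function.update_self]
        · have hnot : ¬ v ≤ i + 1 := by omega
          have hle : u ≤ i + 1 := by omega
          refine ⟨w v, ⟨_, ?_, ?_, ht.glue hw' (by rw [ht2, hw])⟩,
            ⟨_, ?_, ?_, hq2.glue hw' (by rw [Function.update_self, hw])⟩⟩
          · simp [hle, ht1]
          · simp [hnot]
          · simp only [hle, if_true]
            rw [Function.update_of_ne (by omega)]
          · simp [hnot]

lemma tau_reach {E : ℕ → Set (X × X)} {u v : ℕ} (huv : u ≤ v)
    (hb : ∀ e, u ≤ e → e < v → ¬ IsBack E e) {a b : X} (hab : (a, b) ∈ tau E u v v)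
    (ha : a ∈ reach E u) : b ∈ reach E v := by
  obtain ⟨c, hc, s, hs1, hs2, hs⟩ := hab
  simp only at hc hs1 hs2
  have hcr : ∀ c, Relation.ReflTransGen (theta (sig E u v)) a c → c ∈ reach E u := by
    intro c hc
    clear hs1 hs2 hs
    induction hc with
    | refl => exact ha
    | @tail x y _ hxy ih =>
      obtain ⟨z, ⟨t, ht1, ht2, ht⟩, ⟨w, hw1, hw2, hw⟩⟩ := hxy
      simp only at ht1 ht2 hw1 hw2
      rw [← hw1]
      refine hw.mem_reach_back hb huv ?_
      rw [hw2, ← ht2]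
      exact ht.mem_reach (by rwa [ht1]) v huv le_rfl
  rw [← hs2]
  exact hs.mem_reach (by rw [hs1]; exact hcr c hc) v huv le_rfl

/-- Composition of derived relations. -/
lemma compose {L : ℕ} {E : ℕ → Set (X × X)} {r1 r2 u v w : ℕ} {T1 T2 : Set (X × X)}
    (h1 : Dv (pathSys L E) r1 {s : ℕ → X | (s u, s v) ∈ T1})
    (h2 : Dv (pathSys L E) r2 {s : ℕ → X | (s v, s w) ∈ T2}) :
    Dv (pathSys L E) (r1 + r2 + 4)
      {s : ℕ → X | (s u, s w) ∈ {x : X × X | ∃ b, (x.1, b) ∈ T1 ∧ (b, x.2) ∈ T2}} := by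
  have h3 := Dv.inter h1 h2 (dep_pair T1 u v) (Finset.card_le_two)
  have h4 := Dv.weaken h3 (S := {s : ℕ → X | (s u, s w) ∈
    {x : X × X | ∃ b, (x.1, b) ∈ T1 ∧ (b, x.2) ∈ T2}}) ?_ (dep_pair _ u w) Finset.card_le_two
  · exact Cn.mono h4 (by omega)
  · rintro s ⟨hs1, hs2⟩
    exact ⟨s v, hs1, hs2⟩

lemma compose_pres {p : X → X → X → X} {T1 T2 : Set (X × X)} (h1 : Pres3Rel p T1)
    (h2 : Pres3Rel p T2) : Pres3Rel p {x : X × X | ∃ b, (x.1, b) ∈ T1 ∧ (b, x.2) ∈ T2} := by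
  rintro x y z ⟨a, ha, ha'⟩ ⟨b, hb, hb'⟩ ⟨c, hc, hc'⟩
  exact ⟨p a b c, h1 _ _ _ ha hb hc, h2 _ _ _ ha' hb' hc'⟩

lemma edge_derive {L : ℕ} (E : ℕ → Set (X × X)) {i : ℕ} (hi : i < L) :
    Dv (pathSys L E) 2 {s : ℕ → X | (s i, s (i + 1)) ∈ E i} :=
  Dv.of_local {i, i + 1} Finset.card_le_two (dep_pair _ _ _)
    (fun _ hf => hf _ ⟨i, hi, rfl⟩ subset_rfl)

open Classical in
lemma stretch_rel {B : ℕ → Set X} {E : ℕ → Set (X × X)} {l r L n : ℕ} (H : Stretch B E l r)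
    (hrL : r ≤ L) (p : ℕ → X → X → X → X)
    (hinv : ∀ i, l ≤ i → i < r → ∀ k ≤ n, Pres3Rel (p k) (E i)) (t : ℕ) :
    ∀ v, l ≤ v → v ≤ r → ((Finset.Ico l v).filter (IsBack E)).card ≤ t →
      ∃ T : Set (X × X), (∀ k ≤ n, Pres3Rel (p k) T) ∧
        (∀ a b, (a, b) ∈ T → a ∈ reach E l → b ∈ reach E v) ∧
        Dv (pathSys L E) (3 + 13 * t) {s : ℕ → X | (s l, s v) ∈ T} := by
  have nob : ∀ t v, l ≤ v → v ≤ r → (∀ e, l ≤ e → e < v → ¬ IsBack E e) →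
      ∃ T : Set (X × X), (∀ k ≤ n, Pres3Rel (p k) T) ∧
        (∀ a b, (a, b) ∈ T → a ∈ reach E l → b ∈ reach E v) ∧
        Dv (pathSys L E) (3 + 13 * t) {s : ℕ → X | (s l, s v) ∈ T} := by
    intro t v hv hvr hb
    exact ⟨tau E l v v, fun k hk => tau_pres (fun i hi hi' => hinv i hi (by omega) k hk),
      fun a b hab ha => tau_reach hv hb hab ha,
      Cn.mono (tau_derive H hrL le_rfl hvr v hv le_rfl) (by omega)⟩
  induction t with
  | zero =>
    intro v hv hvr hc
    refine nob 0 v hv hvr (fun e he he' hback => ?_)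
    have : e ∈ (Finset.Ico l v).filter (IsBack E) := by simp [he, he', hback]
    rw [Finset.card_eq_zero.1 (Nat.le_zero.1 hc)] at this
    simp at this
  | succ t ih =>
    intro v hv hvr hc
    by_cases hne : ((Finset.Ico l v).filter (IsBack E)).Nonempty
    swap
    · refine nob (t + 1) v hv hvr (fun e he he' hback => hne ⟨e, by simp [he, he', hback]⟩)
    set e := ((Finset.Ico l v).filter (IsBack E)).max' hne with he
    have hemem : e ∈ (Finset.Ico l v).filter (IsBack E) := Finset.max'_mem _ _
    have hmax : ∀ x, l ≤ x → x < v → IsBack E x → x ≤ e := fun x h1 h2 h3 =>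
      Finset.le_max' _ _ (by simp [h1, h2, h3])
    clear_value e
    simp only [Finset.mem_filter, Finset.mem_Ico] at hemem
    obtain ⟨⟨hle, hev⟩, hback⟩ := hemem
    obtain ⟨T, hT1, hT2, hT3⟩ := ih e hle (by omega) (by
      have hss : (Finset.Ico l e).filter (IsBack E) ⊂ (Finset.Ico l v).filter (IsBack E) := by
        refine Finset.ssubset_iff_subset_ne.2 ⟨?_, ?_⟩
        · intro x hx
          simp only [Finset.mem_filter, Finset.mem_Ico] at hx ⊢
          exact ⟨⟨hx.1.1, by omega⟩, hx.2⟩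
        · intro heq
          have : e ∈ (Finset.Ico l e).filter (IsBack E) := by
            rw [heq]; simp [hle, hev, hback]
          simp at this
      have := Finset.card_lt_card hss
      omega)
    have hnb : ∀ x, e + 1 ≤ x → x < v → ¬ IsBack E x := by
      intro x hx hx' hbx
      have := hmax x (by omega) hx' hbx
      omega
    have d1 := compose hT3 (edge_derive (L := L) E (i := e) (by omega))
    have d2 := compose d1 (tau_derive (u := e + 1) (v := v) H hrL (by omega) hvr v hev le_rfl)
    refine ⟨_, ?_, ?_, Cn.mono d2 (by omega)⟩
    · intro k hk
      exact compose_pres (compose_pres (hT1 k hk) (hinv e hle (by omega) k hk))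
        (tau_pres (fun i hi hi' => hinv i (by omega) (by omega) k hk))
    · rintro a b ⟨c, ⟨c', h1, h2⟩, h3⟩ ha
      exact tau_reach hev hnb h3 ⟨c', hT2 _ _ h1 ha, h2⟩

end Lam

/-! ### The main induction for path instances -/

lemma pathSys_finite {X : Type} (L : ℕ) (E : ℕ → Set (X × X)) : (pathSys L E).Finite := by
  refine ((Set.finite_Iio L).image
    (fun i => (({i, i + 1} : Finset ℕ), {s : ℕ → X | (s i, s (i + 1)) ∈ E i}))).subset ?_
  rintro c ⟨i, hi, rfl⟩
  exact ⟨i, hi, rfl⟩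

lemma pathSys_dep {X : Type} (L : ℕ) (E : ℕ → Set (X × X)) : ∀ c ∈ pathSys L E, Dep c.1 c.2 := by
  rintro c ⟨i, hi, rfl⟩
  exact dep_pair _ _ _

lemma reach_sol {X : Type} (E : ℕ → Set (X × X)) (i : ℕ) : ∀ b ∈ reach E i,
    ∃ s : ℕ → X, s i = b ∧ PSol E 0 i s := by
  induction i with
  | zero => intro b _; exact ⟨fun _ => b, rfl, fun i _ hi => by omega⟩
  | succ i ih =>
    rintro b ⟨c, hc, hcb⟩
    obtain ⟨s, hs, hs'⟩ := ih c hc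
    exact ⟨_, Function.update_self _ _ _, hs'.snoc (by rw [hs]; exact hcb)⟩

/-- The elements having both a successor and a predecessor. -/
def core {X : Type} (L : ℕ) (E : ℕ → Set (X × X)) (i : ℕ) : Set X :=
  {b | (i < L → ∃ c, (b, c) ∈ E i) ∧ (∀ j < L, j + 1 = i → ∃ a, (a, b) ∈ E j)}

lemma core_pres {X : Type} {p : X → X → X → X} {L : ℕ} {E : ℕ → Set (X × X)}
    (h : ∀ i < L, Pres3Rel p (E i)) {i : ℕ} {x y z : X} (hx : x ∈ core L E i)
    (hy : y ∈ core L E i) (hz : z ∈ core L E i) : p x y z ∈ core L E i := by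
  constructor
  · intro hi
    obtain ⟨a, ha⟩ := hx.1 hi
    obtain ⟨b, hb⟩ := hy.1 hi
    obtain ⟨c, hc⟩ := hz.1 hi
    exact ⟨p a b c, h i hi _ _ _ ha hb hc⟩
  · intro j hj hji
    obtain ⟨a, ha⟩ := hx.2 j hj hji
    obtain ⟨b, hb⟩ := hy.2 j hj hji
    obtain ⟨c, hc⟩ := hz.2 j hj hji
    exact ⟨p a b c, h j hj _ _ _ ha hb hc⟩

lemma dep_single {X : Type} (S : Set X) (u : ℕ) :
    Dep ({u} : Finset ℕ) {s : ℕ → X | s u ∈ S} := by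
  intro f g hfg hf
  have h1 := hfg u (by simp)
  simp only [Set.mem_ofPred_eq] at hf ⊢
  rwa [← h1]

lemma core_derive {X : Type} (L : ℕ) (E : ℕ → Set (X × X)) (i : ℕ) :
    Dv (pathSys L E) 3 {s : ℕ → X | s i ∈ core L E i} := by
  refine Dv.of_local {i - 1, i, i + 1} Finset.card_le_three
    ((dep_single _ i).mono (by intro x; simp; tauto)) ?_
  intro s hs
  constructor
  · intro hi
    exact ⟨s (i + 1), hs _ ⟨i, hi, rfl⟩ (by intro x; simp; tauto)⟩
  · rintro j hj rfl
    exact ⟨s j, hs _ ⟨j, hj, rfl⟩ (by intro x; simp; tauto)⟩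

lemma core_sub {X : Type} {L : ℕ} {B : ℕ → Set X} {E : ℕ → Set (X × X)} (hL : 0 < L)
    (hsub : ∀ i < L, ∀ x ∈ E i, x.1 ∈ B i ∧ x.2 ∈ B (i + 1)) {i : ℕ} (hi : i ≤ L) :
    core L E i ⊆ B i := by
  rintro b ⟨h1, h2⟩
  rcases hi.lt_or_eq with h | rfl
  · obtain ⟨c, hc⟩ := h1 h
    exact (hsub i h _ hc).1
  · obtain ⟨j, rfl⟩ : ∃ j, i = j + 1 := ⟨i - 1, by omega⟩
    obtain ⟨c, hc⟩ := h2 j (by omega) rfl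
    exact (hsub j (by omega) _ hc).2

lemma path_base {X : Type} [Nonempty X] {L : ℕ} {B : ℕ → Set X} {E : ℕ → Set (X × X)}
    (hsub : ∀ i < L, ∀ x ∈ E i, x.1 ∈ B i ∧ x.2 ∈ B (i + 1))
    (hB : ∀ i ≤ L, (B i).Finite ∧ (B i).ncard ≤ 1)
    (hun : ¬ ∃ s : ℕ → X, ∀ i < L, (s i, s (i + 1)) ∈ E i) : Dv (pathSys L E) 2 ∅ := by
  by_cases hne : ∃ i < L, E i = ∅
  · obtain ⟨i, hi, he⟩ := hne
    have := edge_derive E hi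
    rw [he] at this
    exact this
  · exfalso
    push Not at hne
    apply hun
    have hB1 : ∀ i ≤ L, ∀ x ∈ B i, ∀ y ∈ B i, x = y := fun i hi x hx y hy =>
      (Set.ncard_le_one (hB i hi).1).1 (hB i hi).2 x hx y hy
    have : ∀ i, ∃ x : X, i ≤ L → 0 < L → x ∈ B i := by
      intro i
      by_cases hi : i < L
      · obtain ⟨x, hx⟩ := hne i hi
        exact ⟨x.1, fun _ _ => (hsub i hi x hx).1⟩
      · by_cases h : i = L ∧ 0 < L
        · obtain ⟨x, hx⟩ := hne (L - 1) (by omega)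
          refine ⟨x.2, fun _ _ => ?_⟩
          have := (hsub (L - 1) (by omega) x hx).2
          rwa [show L - 1 + 1 = i by omega] at this
        · exact ⟨Classical.arbitrary X, fun h1 h2 => absurd ⟨by omega, h2⟩ h⟩
    choose s hs using this
    refine ⟨s, fun i hi => ?_⟩
    obtain ⟨⟨a, b⟩, hx⟩ := hne i hi
    obtain ⟨h1, h2⟩ := hsub i hi _ hx
    rw [hB1 i hi.le _ (hs i hi.le (by omega)) _ h1,
      hB1 (i + 1) hi _ (hs (i + 1) hi (by omega)) _ h2]
    exact hx

theorem path_claim (n d : ℕ) : ∃ M : ℕ, ∀ (X : Type) [Nonempty X] (p : ℕ → X → X → X → X)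
    (_ : IsHMChain n p) (L : ℕ) (B : ℕ → Set X) (E : ℕ → Set (X × X))
    (_ : ∀ i < L, ∀ x ∈ E i, x.1 ∈ B i ∧ x.2 ∈ B (i + 1))
    (_ : ∀ i < L, ∀ k ≤ n, Pres3Rel (p k) (E i))
    (_ : ∀ i ≤ L, (B i).Finite ∧ (B i).ncard ≤ d + 1)
    (_ : (B 0).ncard ≤ 1) (_ : (B L).ncard ≤ 1)
    (_ : ¬ ∃ s : ℕ → X, ∀ i < L, (s i, s (i + 1)) ∈ E i), Dv (pathSys L E) M ∅ := by
  classical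
  induction d with
  | zero =>
    exact ⟨2, fun X _ p hp L B E hsub hinv hB _ _ hun => path_base hsub hB hun⟩
  | succ d ih =>
    obtain ⟨M, hM⟩ := ih
    obtain ⟨N, hN⟩ := few_back n (d + 2)
    set r0 := 15 + 13 * N with hr0
    refine ⟨r0 + 5 + 1 * M, ?_⟩
    intro X _ p hp L B E hsub hinv hB hB0 hBL hun
    have hL : 0 < L := by
      by_contra hL
      exact hun ⟨fun _ => Classical.arbitrary X, fun i hi => by omega⟩
    set Small : ℕ → Prop := fun i => i = 0 ∨ i = L ∨ (core L E i).ncard ≤ d + 1 with hSmall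
    have hcs : ∀ i ≤ L, core L E i ⊆ B i := fun i hi => core_sub hL hsub hi
    have hbig : ∀ i ≤ L, ¬ Small i → core L E i = B i := by
      intro i hi hns
      simp only [hSmall, not_or, not_le] at hns
      refine Set.eq_of_subset_of_ncard_le (hcs i hi) ?_ (hB i hi).1
      have := (hB i hi).2
      omega
    -- jumping over gaps
    have gap : ∀ k k', ∃ T : Set (X × X), k < k' → k' ≤ L → (∀ j, k < j → j < k' → ¬ Small j) →
        (∀ q ≤ n, Pres3Rel (p q) T) ∧
        (∀ a b, (a, b) ∈ T → a ∈ reach E k → b ∈ reach E k') ∧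
        Dv (pathSys L E) r0 {s : ℕ → X | (s k, s k') ∈ T} := by
      intro k k'
      by_cases hcond : k < k' ∧ k' ≤ L ∧ (∀ j, k < j → j < k' → ¬ Small j)
      swap
      · exact ⟨∅, fun h1 h2 h3 => absurd ⟨h1, h2, h3⟩ hcond⟩
      obtain ⟨h1, h2, h3⟩ := hcond
      suffices hs : ∃ T : Set (X × X), (∀ q ≤ n, Pres3Rel (p q) T) ∧
          (∀ a b, (a, b) ∈ T → a ∈ reach E k → b ∈ reach E k') ∧
          Dv (pathSys L E) r0 {s : ℕ → X | (s k, s k') ∈ T} by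
        obtain ⟨T, hT⟩ := hs
        exact ⟨T, fun _ _ _ => hT⟩
      by_cases hk : k' = k + 1
      · subst hk
        exact ⟨E k, hinv k (by omega), fun a b hab ha => ⟨a, ha, hab⟩,
          Cn.mono (edge_derive E (by omega)) (by omega)⟩
      obtain ⟨r, rfl⟩ : ∃ r, k' = r + 1 := ⟨k' - 1, by omega⟩
      have hBc : ∀ j, k + 1 ≤ j → j ≤ r → core L E j = B j := fun j hj hj' =>
        hbig j (by omega) (h3 j (by omega) (by omega))
      have H : Stretch B E (k + 1) r := by
        refine ⟨fun i _ hi => hsub i (by omega), ?_, ?_⟩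
        · intro i hi hi' b hb
          rw [← hBc (i + 1) (by omega) (by omega)] at hb
          exact hb.2 i (by omega) rfl
        · intro i hi hi' b hb
          rw [← hBc i (by omega) (by omega)] at hb
          exact hb.1 (by omega)
      have hcard := hN X p hp B E (k + 1) r H (fun i _ hi => hB i (by omega))
        (fun i _ hi => hinv i (by omega)) ((Finset.Ico (k + 1) r).filter (IsBack E)) (by
          intro e he
          simp only [Finset.mem_filter, Finset.mem_Ico] at he
          exact ⟨he.1.1, he.1.2, he.2⟩)
      obtain ⟨T, hT1, hT2, hT3⟩ := stretch_rel (L := L) (n := n) H (by omega) p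
        (fun i _ hi => hinv i (by omega)) N r (by omega) le_rfl hcard.le
      have d1 := compose (edge_derive (L := L) E (i := k) (by omega)) hT3
      have d2 := compose d1 (edge_derive (L := L) E (i := r) (by omega))
      refine ⟨_, ?_, ?_, Cn.mono d2 (by omega)⟩
      · intro q hq
        exact compose_pres (compose_pres (hinv k (by omega) q hq) (hT1 q hq))
          (hinv r (by omega) q hq)
      · rintro a b ⟨c, ⟨c', e1, e2⟩, e3⟩ ha
        exact ⟨c, hT2 _ _ e2 ⟨a, ha, e1⟩, e3⟩
    choose T hT using gap
    set pr : ℕ → ℕ := fun i => Nat.findGreatest Small i with hpr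
    have pr_le : ∀ i, pr i ≤ i := fun i => Nat.findGreatest_le i
    have pr_small : ∀ i, Small (pr i) := fun i =>
      Nat.findGreatest_spec (P := Small) (Nat.zero_le i) (Or.inl rfl)
    have pr_succ : ∀ i, pr (i + 1) = if Small (i + 1) then i + 1 else pr i := fun i =>
      Nat.findGreatest_succ i
    have pr_zero : pr 0 = 0 := Nat.findGreatest_zero
    have pr_L : pr L = L := Nat.findGreatest_eq (Or.inr (Or.inl rfl))
    have pr_gap : ∀ i j, pr i < j → j < i + 1 → ¬ Small j := fun i j h1 h2 =>
      Nat.findGreatest_is_greatest h1 (by omega)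
    have hTi : ∀ i < L, _ := fun i hi => hT (pr i) (i + 1) (by have := pr_le i; omega) hi (pr_gap i)
    set E' : ℕ → Set (X × X) := fun i =>
      if Small (i + 1) then
        {x | x.1 ∈ core L E (pr i) ∧ x.2 ∈ core L E (i + 1) ∧ x ∈ T (pr i) (i + 1)}
      else {x | x.1 = x.2 ∧ x.1 ∈ core L E (pr i)} with hE'
    have hcfin : ∀ i ≤ L, (core L E i).Finite := fun i hi => (hB i hi).1.subset (hcs i hi)
    have key := hM X p hp L (fun i => core L E (pr i)) E' ?_ ?_ ?_ ?_ ?_ ?_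
    · -- translate back
      have hsim := simulate (F := pathSys L E) (F' := pathSys L E') (pathSys_finite L E')
        (pathSys_dep L E') (fun s i => s (pr i)) (fun i => {pr i}) 1 (by simp)
        (fun i f g h => h (pr i) (by simp)) (r0 + 5) ?_ key
      · simpa [Dv] using hsim
      · rintro c ⟨i, hi, rfl⟩
        by_cases hs : Small (i + 1)
        · have e1 : Dv (pathSys L E) (r0 + 5)
              ({s : ℕ → X | (s (pr i), s (i + 1)) ∈ T (pr i) (i + 1)} ∩
                ({s : ℕ → X | s (pr i) ∈ core L E (pr i)} ∩
                  {s : ℕ → X | s (i + 1) ∈ core L E (i + 1)})) :=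
            Cn.mono (Dv.inter (hTi i hi).2.2
              (Dv.inter (core_derive L E (pr i)) (core_derive L E (i + 1))
                (dep_single _ _) (s := 1) (by simp)) (dep_pair _ _ _) Finset.card_le_two)
              (by omega)
          convert e1 using 1
          ext s
          simp only [hE', hs, if_true, Set.mem_preimage, Set.mem_ofPred_eq, Set.mem_inter_iff,
            pr_succ]
          tauto
        · have e1 : Dv (pathSys L E) (r0 + 5) {s : ℕ → X | s (pr i) ∈ core L E (pr i)} :=
            Cn.mono (core_derive L E (pr i)) (by omega)
          convert e1 using 1
          ext s
          simp only [hE', hs, if_false, Set.mem_preimage, Set.mem_ofPred_eq, pr_succ, true_and]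
    · intro i hi x hx
      by_cases hs : Small (i + 1)
      · simp only [hE', hs, if_true, Set.mem_ofPred_eq] at hx
        simp only [pr_succ, hs, if_true]
        exact ⟨hx.1, hx.2.1⟩
      · simp only [hE', hs, if_false, Set.mem_ofPred_eq] at hx
        simp only [pr_succ, hs, if_false]
        exact ⟨hx.2, hx.1 ▸ hx.2⟩
    · intro i hi k hk x y z hx hy hz
      have hpk : ∀ i < L, Pres3Rel (p k) (E i) := fun i hi => hinv i hi k hk
      by_cases hs : Small (i + 1)
      · simp only [hE', hs, if_true, Set.mem_ofPred_eq] at hx hy hz ⊢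
        exact ⟨core_pres hpk hx.1 hy.1 hz.1, core_pres hpk hx.2.1 hy.2.1 hz.2.1,
          (hTi i hi).1 k hk _ _ _ hx.2.2 hy.2.2 hz.2.2⟩
      · simp only [hE', hs, if_false, Set.mem_ofPred_eq] at hx hy hz ⊢
        exact ⟨by rw [hx.1, hy.1, hz.1], core_pres hpk hx.2 hy.2 hz.2⟩
    · intro i hi
      have hle := pr_le i
      refine ⟨hcfin _ (by omega), ?_⟩
      have hm := Set.ncard_le_ncard (hcs (pr i) (by omega)) (hB (pr i) (by omega)).1
      rcases pr_small i with h | h | h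
      · rw [h] at hm ⊢
        omega
      · rw [h] at hm ⊢
        omega
      · exact h
    · have hm := Set.ncard_le_ncard (hcs 0 (by omega)) (hB 0 (by omega)).1
      simp only [pr_zero]
      omega
    · have hm := Set.ncard_le_ncard (hcs L le_rfl) (hB L le_rfl).1
      simp only [pr_L]
      omega
    · rintro ⟨t, ht⟩
      have hr : ∀ i ≤ L, t i ∈ reach E (pr i) := by
        intro i
        induction i with
        | zero => intro _; rw [pr_zero]; trivial
        | succ i ihi =>
          intro hi
          have h1 := ihi (by omega)
          have h2 := ht i (by omega)
          by_cases hs : Small (i + 1)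
          · simp only [hE', hs, if_true, Set.mem_ofPred_eq] at h2
            simp only [pr_succ, hs, if_true]
            exact (hTi i (by omega)).2.1 _ _ h2.2.2 h1
          · simp only [hE', hs, if_false, Set.mem_ofPred_eq] at h2
            simp only [pr_succ, hs, if_false]
            exact h2.1 ▸ h1
      have hfin := hr L le_rfl
      rw [pr_L] at hfin
      obtain ⟨s, -, hs⟩ := reach_sol E L _ hfin
      exact hun ⟨s, fun i hi => hs i (by omega) hi⟩
/-! ### Translation to the Datalog program -/

open Classical in
/-- The constraint system of an instance. -/
noncomputable def sysI {A V : Type} (I : Instance A V) : Set (Finset V × Set (V → A)) :=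
  {c | ∃ c0 ∈ I.constraints,
    c = (Finset.univ.image c0.2.1, {f | (fun i => f (c0.2.1 i)) ∈ c0.2.2})}

lemma derives_sound {A V : Type} {𝔸 : RelStruct A} {r : ℕ} {I : Instance A V} {f : V → A}
    (hf : I.Sol f) {n : ℕ} {ρ : Fin n → V} {R : Set (Fin n → A)} (h : Derives 𝔸 r I ρ R) :
    (fun i => f (ρ i)) ∈ R := by
  induction h with
  | base ρ R h => exact hf _ h
  | step rule ω _ hedb ih =>
    refine rule.consistent (fun i => f (ω i)) (fun a ha => ih a ha) (fun a ha => ?_)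
    exact hf _ (hedb a ha)

lemma goal_sound {A V : Type} {𝔸 : RelStruct A} {r : ℕ} {I : Instance A V}
    (h : DerivesGoal 𝔸 r I) : ¬ I.Satisfiable := by
  rintro ⟨f, hf⟩
  obtain ⟨n, ρ, _, hd⟩ := h
  exact derives_sound hf hd

lemma exists_coding {V : Type} [Nonempty V] (U : Finset V) (M : ℕ) (hM : 0 < M)
    (hU : U.card ≤ M) : ∃ (e : V → Fin M) (ω : Fin M → V), ∀ v ∈ U, ω (e v) = v := by
  classical
  have : Nonempty (U ↪ Fin M) := Function.Embedding.nonempty_of_card_le (by simpa using hU)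
  obtain ⟨e0⟩ := this
  obtain ⟨v0⟩ := ‹Nonempty V›
  refine ⟨fun v => if h : v ∈ U then e0 ⟨v, h⟩ else ⟨0, hM⟩,
    fun i => if h : ∃ u, e0 u = i then (h.choose : V) else v0, fun v hv => ?_⟩
  have h : ∃ u, e0 u = e0 ⟨v, hv⟩ := ⟨_, rfl⟩
  simp only [hv, dif_pos, h]
  have := e0.injective h.choose_spec
  simp only [this]

lemma translate {A V : Type} [Nonempty V] {𝔸 : RelStruct A} (hfin : 𝔸.basic.Finite)
    {r M : ℕ} (hr : 2 * r < M) (har : ∀ b ∈ 𝔸.basic, b.1 ≤ M) {I : Instance A V}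
    (hI : IsCSPInstance 𝔸 I) {R : Set (V → A)} (h : Dv (sysI I) r R) :
    ∃ k ≤ r, ∃ ρ : Fin k → V,
      (∀ f g : V → A, (∀ i, f (ρ i) = g (ρ i)) → f ∈ R → g ∈ R) ∧
      Derives 𝔸 M I ρ {g | ∃ f ∈ R, ∀ i, f (ρ i) = g i} := by
  classical
  have hM : 0 < M := by omega
  induction h with
  | refl =>
    refine ⟨0, Nat.zero_le _, Fin.elim0, fun _ _ _ _ => trivial, ?_⟩
    obtain ⟨v0⟩ := ‹Nonempty V›
    by_cases hA : Nonempty A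
    · obtain ⟨a0⟩ := hA
      let rule : Rule A 𝔸 M :=
        { head := ⟨0, Fin.elim0, {g | ∃ f ∈ (Set.univ : Set (V → A)), ∀ i : Fin 0,
            f (Fin.elim0 i) = g i}⟩
          idb := none
          edb := []
          head_arity := Nat.zero_le _
          idb_arity := by simp
          edb_arity := by simp
          edb_basic := by simp
          nodup := List.nodup_nil
          consistent := fun f _ _ => ⟨fun _ => a0, trivial, fun i => i.elim0⟩
          mirror := by simp }
      have := Derives.step (I := I) rule (fun _ => v0) (by simp [rule]) (by simp [rule])
      convert this using 1
    · let rule : Rule A 𝔸 M :=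
        { head := ⟨0, Fin.elim0, {g | ∃ f ∈ (Set.univ : Set (V → A)), ∀ i : Fin 0,
            f (Fin.elim0 i) = g i}⟩
          idb := none
          edb := []
          head_arity := Nat.zero_le _
          idb_arity := by simp
          edb_arity := by simp
          edb_basic := by simp
          nodup := List.nodup_nil
          consistent := fun f _ _ => (hA ⟨f ⟨0, hM⟩⟩).elim
          mirror := by simp }
      have := Derives.step (I := I) rule (fun _ => v0) (by simp [rule]) (by simp [rule])
      convert this using 1
  | @tail R S _ hstep ih =>
    obtain ⟨k, hk, ρ, hρ, hd⟩ := ih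
    obtain ⟨Z, hZ, _, hZS, hstep⟩ := hstep
    have hU : (Z ∪ Finset.univ.image ρ).card ≤ M := by
      refine (Finset.card_union_le _ _).trans ?_
      have : (Finset.univ.image ρ).card ≤ k := by
        simpa using Finset.card_image_le (s := Finset.univ) (f := ρ)
      omega
    obtain ⟨e, ω, heω⟩ := exists_coding (Z ∪ Finset.univ.image ρ) M hM hU
    have heZ : ∀ v ∈ Z, ω (e v) = v := fun v hv => heω v (Finset.mem_union_left _ hv)
    have heρ : ∀ i, ω (e (ρ i)) = ρ i :=
      fun i => heω _ (Finset.mem_union_right _ (Finset.mem_image_of_mem _ (Finset.mem_univ i)))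
    let ρ' : Fin Z.card → V := fun i => (Z.equivFin.symm i : V)
    have hρ'Z : ∀ i, ρ' i ∈ Z := fun i => (Z.equivFin.symm i).2
    have hρ'S : ∀ f g : V → A, (∀ i, f (ρ' i) = g (ρ' i)) → f ∈ S → g ∈ S := by
      intro f g hfg hf
      refine hZS f g (fun v hv => ?_) hf
      have := hfg (Z.equivFin ⟨v, hv⟩)
      simpa [ρ'] using this
    let T : Set (Atom A M) := {a | ∃ c ∈ I.constraints, (∀ i, c.2.1 i ∈ Z) ∧
      a = ⟨c.1, fun i => e (c.2.1 i), c.2.2⟩}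
    have hT : T.Finite := by
      have := hfin.to_subtype
      refine (Set.finite_range (fun x : (Σ b : 𝔸.basic, (Fin b.1.1 → Fin M)) =>
        (⟨x.1.1.1, x.2, x.1.1.2⟩ : Atom A M))).subset ?_
      rintro a ⟨c, hc, _, rfl⟩
      exact ⟨⟨⟨⟨c.1, c.2.2⟩, hI c hc⟩, fun i => e (c.2.1 i)⟩, rfl⟩
    have hmem : ∀ a, a ∈ hT.toFinset.toList ↔ a ∈ T := by
      intro a; simp
    have hloc : ∀ g : Fin M → A, (∀ a ∈ hT.toFinset.toList, a.holds g) →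
        ((fun v => g (e v)) ∈ R ↔ (fun v => g (e v)) ∈ S) := by
      intro g hg
      apply hstep
      rintro _ ⟨c, hc, rfl⟩ hcZ
      refine hg ⟨c.1, fun i => e (c.2.1 i), c.2.2⟩ ((hmem _).2 ⟨c, hc, fun i => ?_, rfl⟩)
      exact hcZ (by simp)
    let rule : Rule A 𝔸 M :=
      { head := ⟨Z.card, fun i => e (ρ' i), {g | ∃ f ∈ S, ∀ i, f (ρ' i) = g i}⟩
        idb := some ⟨k, fun i => e (ρ i), {g | ∃ f ∈ R, ∀ i, f (ρ i) = g i}⟩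
        edb := hT.toFinset.toList
        head_arity := by dsimp only; omega
        idb_arity := by
          intro a ha
          obtain rfl := Option.some.inj ha
          dsimp only; omega
        edb_arity := by
          intro a ha
          obtain ⟨c, hc, _, rfl⟩ := (hmem a).1 ha
          exact har _ (hI c hc)
        edb_basic := by
          intro a ha
          obtain ⟨c, hc, _, rfl⟩ := (hmem a).1 ha
          exact hI c hc
        nodup := Finset.nodup_toList _
        consistent := by
          intro g h1 h2
          obtain ⟨f, hf, hfg⟩ := h1 _ rfl
          exact ⟨fun v => g (e v), (hloc g h2).1 (hρ f _ hfg hf), fun i => rfl⟩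
        mirror := by
          intro a ha g h1 h2
          obtain rfl := Option.some.inj ha
          obtain ⟨f, hf, hfg⟩ := h1
          exact ⟨fun v => g (e v), (hloc g h2).2 (hρ'S f _ hfg hf), fun i => rfl⟩ }
    refine ⟨Z.card, hZ, ρ', hρ'S, ?_⟩
    have hfinal := Derives.step (I := I) rule ω ?_ ?_
    · have hh : (fun i => ω (rule.head.scope i)) = ρ' := by
        funext i
        exact heZ _ (hρ'Z i)
      rw [hh] at hfinal
      exact hfinal
    · intro a ha
      obtain rfl := Option.some.inj ha
      have hh : (fun i => ω (e (ρ i))) = ρ := funext heρ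
      dsimp only
      rw [hh]
      exact hd
    · intro a ha
      obtain ⟨c, hc, hcZ, rfl⟩ := (hmem a).1 ha
      have hh : (fun i => ω (e (c.2.1 i))) = c.2.1 := funext fun i => heZ _ (hcZ i)
      dsimp only
      rw [hh]
      exact hc

lemma goal_of_dv {A V : Type} [Nonempty V] {𝔸 : RelStruct A} (hfin : 𝔸.basic.Finite)
    {r M : ℕ} (hr : 2 * r < M) (har : ∀ b ∈ 𝔸.basic, b.1 ≤ M) {I : Instance A V}
    (hI : IsCSPInstance 𝔸 I) (h : Dv (sysI I) r ∅) : DerivesGoal 𝔸 M I := by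
  obtain ⟨k, hk, ρ, _, hd⟩ := translate hfin hr har hI h
  refine ⟨k, ρ, by omega, ?_⟩
  have : {g : Fin k → A | ∃ f ∈ (∅ : Set (V → A)), ∀ i, f (ρ i) = g i} = ∅ := by
    ext; simp
  rwa [this] at hd

/-! ### From pathwidth decompositions to path systems -/

lemma ext_finite {W A : Type} [Finite A] (a0 : A) (U : Finset W) {w : ℕ} (hU : U.card ≤ w + 1)
    (B : Set (W → A)) (hB : ∀ x ∈ B, ∀ v ∉ U, x v = a0) :
    B.Finite ∧ B.ncard ≤ Nat.card A ^ (w + 1) := by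
  classical
  let φ : (U → A) → W → A := fun g v => if h : v ∈ U then g ⟨v, h⟩ else a0
  have hsub : B ⊆ Set.range φ := by
    intro x hx
    refine ⟨fun u => x u, ?_⟩
    funext v
    by_cases h : v ∈ U
    · simp [φ, h]
    · simp [φ, h, hB x hx v h]
  have hfin : (Set.range φ).Finite := Set.finite_range φ
  refine ⟨hfin.subset hsub, (Set.ncard_le_ncard hsub hfin).trans ?_⟩
  rw [← Set.image_univ]
  refine (Set.ncard_image_le Set.finite_univ).trans ?_
  rw [Set.ncard_univ, Nat.card_fun, Nat.card_eq_fintype_card (α := U), Fintype.card_coe]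
  have : 0 < Nat.card A := Nat.card_pos_iff.2 ⟨⟨a0⟩, inferInstance⟩
  exact Nat.pow_le_pow_right this hU

lemma unsat_dv {A V W : Type} [Finite A] (a0 : A) {𝔸 : RelStruct A}
    {n : ℕ} {p : ℕ → A → A → A → A} (hp : IsHMChain n p)
    (hpoly : ∀ k ≤ n, IsPolymorphism 𝔸 (ternaryOp (p k))) {w M0 : ℕ}
    (hM0 : ∀ (X : Type) [Nonempty X] (p : ℕ → X → X → X → X)
      (_ : IsHMChain n p) (L : ℕ) (B : ℕ → Set X) (E : ℕ → Set (X × X))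
      (_ : ∀ i < L, ∀ x ∈ E i, x.1 ∈ B i ∧ x.2 ∈ B (i + 1))
      (_ : ∀ i < L, ∀ k ≤ n, Pres3Rel (p k) (E i))
      (_ : ∀ i ≤ L, (B i).Finite ∧ (B i).ncard ≤ Nat.card A ^ (w + 1) + 1)
      (_ : (B 0).ncard ≤ 1) (_ : (B L).ncard ≤ 1)
      (_ : ¬ ∃ s : ℕ → X, ∀ i < L, (s i, s (i + 1)) ∈ E i), Dv (pathSys L E) M0 ∅)
    {I : Instance A V} {J : Instance A W} (h : W → V) (hJ : IsCSPInstance 𝔸 J)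
    (hunsat : ¬ J.Satisfiable)
    (hJI : ∀ c ∈ J.constraints, (⟨c.1, fun i => h (c.2.1 i), c.2.2⟩ :
          Σ n : ℕ, (Fin n → V) × Set (Fin n → A)) ∈ I.constraints)
    (m : ℕ) (U : ℕ → Finset W) (hU0 : U 0 = ∅) (hUL : U (m + 1) = ∅)
    (hUc : ∀ j, (U j).card ≤ w + 1) (hcov : ∀ v, ∃ j ≤ m, v ∈ U j)
    (hconv : ∀ i q j, i ≤ q → q ≤ j → ∀ v, v ∈ U i → v ∈ U j → v ∈ U q)
    (hcon : ∀ c ∈ J.constraints, ∃ j ≤ m, ∀ i, c.2.1 i ∈ U j) :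
    Dv (sysI I) (2 * (w + 1) + (w + 1) * M0) ∅ := by
  classical
  let B : ℕ → Set (W → A) := fun j => {x | (∀ v ∉ U j, x v = a0) ∧
    ∀ c ∈ J.constraints, (∀ i, c.2.1 i ∈ U j) → (fun i => x (c.2.1 i)) ∈ c.2.2}
  let E : ℕ → Set ((W → A) × (W → A)) := fun j => {x | x.1 ∈ B j ∧ x.2 ∈ B (j + 1) ∧
    ∀ v, v ∈ U j → v ∈ U (j + 1) → x.1 v = x.2 v}
  let P : ℕ → (W → A) → (W → A) → (W → A) → (W → A) :=
    fun k x y z v => p k (x v) (y v) (z v)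
  have hP : IsHMChain n P := by
    obtain ⟨h1, h2, h3, h4⟩ := hp
    exact ⟨fun k hk x => funext fun v => h1 k hk _, fun x y z => funext fun v => h2 _ _ _,
      fun x y z => funext fun v => h3 _ _ _, fun k hk x y => funext fun v => h4 k hk _ _⟩
  have hBpres : ∀ j, ∀ k ≤ n, ∀ x y z, x ∈ B j → y ∈ B j → z ∈ B j → P k x y z ∈ B j := by
    intro j k hk x y z hx hy hz
    refine ⟨fun v hv => ?_, fun c hc hcU => ?_⟩
    · simp only [P, hx.1 v hv, hy.1 v hv, hz.1 v hv]
      exact hp.1 k hk a0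
    · have := hpoly k hk _ (hJ c hc) (fun t i => (![x, y, z] t) (c.2.1 i)) (by
        intro t
        fin_cases t
        · exact hx.2 c hc hcU
        · exact hy.2 c hc hcU
        · exact hz.2 c hc hcU)
      exact this
  have hB1 : ∀ j, U j = ∅ → (B j).ncard ≤ 1 := by
    intro j hj
    rw [Set.ncard_le_one_iff (ext_finite a0 (U j) (hUc j) (B j) (fun x hx => hx.1)).1]
    intro x y hx hy
    funext v
    rw [hx.1 v (by simp [hj]), hy.1 v (by simp [hj])]
  have hpath : Dv (pathSys (m + 1) E) M0 ∅ := by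
    haveI : Nonempty (W → A) := ⟨fun _ => a0⟩
    refine hM0 (W → A) P hP (m + 1) B E (fun i _ x hx => ⟨hx.1, hx.2.1⟩) ?_ ?_
      (hB1 _ hU0) (hB1 _ hUL) ?_
    · intro i _ k hk x y z hx hy hz
      refine ⟨hBpres i k hk _ _ _ hx.1 hy.1 hz.1, hBpres (i + 1) k hk _ _ _ hx.2.1 hy.2.1 hz.2.1,
        fun v hv hv' => ?_⟩
      simp only [P, hx.2.2 v hv hv', hy.2.2 v hv hv', hz.2.2 v hv hv']
    · intro i _
      obtain ⟨h1, h2⟩ := ext_finite a0 (U i) (hUc i) (B i) (fun x hx => hx.1)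
      exact ⟨h1, by omega⟩
    · rintro ⟨s, hs⟩
      have hagree : ∀ i j, i ≤ j → j ≤ m → ∀ v, v ∈ U i → v ∈ U j → s i v = s j v := by
        intro i j hij
        induction j, hij using Nat.le_induction with
        | base => intros; rfl
        | succ j hij ih =>
          intro hj v hv hv'
          have hvj := hconv i j (j + 1) hij (Nat.le_succ j) v hv hv'
          rw [ih (by omega) v hv hvj]
          exact (hs j (by omega)).2.2 v hvj hv'
      choose jj hjj hjU using hcov
      refine hunsat ⟨fun v => s (jj v) v, fun c hc => ?_⟩
      obtain ⟨j, hj, hcj⟩ := hcon c hc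
      have h1 := (hs j (by omega)).1.2 c hc hcj
      have h2 : (fun i => s (jj (c.2.1 i)) (c.2.1 i)) = fun i => s j (c.2.1 i) := by
        funext i
        rcases le_total (jj (c.2.1 i)) j with hle | hle
        · exact hagree _ _ hle hj _ (hjU _) (hcj i)
        · exact (hagree _ _ hle (hjj _) _ (hcj i) (hjU _)).symm
      exact (congrArg (· ∈ c.2.2) h2).mpr h1
  let Φ : (V → A) → ℕ → W → A := fun f j v => if v ∈ U j then f (h v) else a0
  let bag : ℕ → Finset V := fun j => (U j).image h
  have hbag : ∀ j, (bag j).card ≤ w + 1 := fun j => Finset.card_image_le.trans (hUc j)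
  have hloc : ∀ j f g, (∀ v ∈ bag j, f v = g v) → Φ f j = Φ g j := by
    intro j f g hfg
    funext v
    by_cases hv : v ∈ U j
    · simp only [Φ, hv, if_true]
      exact hfg _ (Finset.mem_image_of_mem h hv)
    · simp only [Φ, hv, if_false]
  have hmemB : ∀ (Z : Finset V) (f : V → A), (∀ c ∈ sysI I, c.1 ⊆ Z → f ∈ c.2) →
      ∀ j, bag j ⊆ Z → Φ f j ∈ B j := by
    intro Z f hf j hj
    refine ⟨fun v hv => by simp only [Φ, hv, if_false], fun c hc hcU => ?_⟩
    have h1 := hf _ ⟨_, hJI c hc, rfl⟩ (by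
      intro v hv
      simp only [Finset.mem_image, Finset.mem_univ, true_and] at hv
      obtain ⟨i, rfl⟩ := hv
      exact hj (Finset.mem_image_of_mem h (hcU i)))
    have h2 : (fun i => Φ f j (c.2.1 i)) = fun i => f (h (c.2.1 i)) := by
      funext i
      simp only [Φ, hcU i, if_true]
    exact (congrArg (· ∈ c.2.2) h2).mpr h1
  have hd : ∀ c ∈ pathSys (m + 1) E, Dv (sysI I) (2 * (w + 1)) (Φ ⁻¹' c.2) := by
    rintro _ ⟨j, hj, rfl⟩
    refine Dv.of_local (bag j ∪ bag (j + 1)) ?_ ?_ ?_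
    · have := Finset.card_union_le (bag j) (bag (j + 1))
      have := hbag j
      have := hbag (j + 1)
      omega
    · intro f g hfg hf
      have h1 := hloc j f g (fun v hv => hfg v (Finset.mem_union_left _ hv))
      have h2 := hloc (j + 1) f g (fun v hv => hfg v (Finset.mem_union_right _ hv))
      change (Φ g j, Φ g (j + 1)) ∈ E j
      rw [← h1, ← h2]
      exact hf
    · intro f hf
      refine ⟨hmemB _ f hf j Finset.subset_union_left,
        hmemB _ f hf (j + 1) Finset.subset_union_right, fun v hv hv' => ?_⟩
      simp only [Φ, hv, hv', if_true]
  have := simulate (pathSys_finite (m + 1) E) (pathSys_dep (m + 1) E) Φ bag (w + 1) hbag hloc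
    (2 * (w + 1)) hd hpath
  simpa [Dv] using this

/-- main theorem.
Let `𝔸` be a relational structure admitting a chain of `n` Hagemann–Mitschke
terms as polymorphisms, with bounded pathwidth duality (equivalently,
`CSP(𝔸)` is decided by some linear Datalog program). Then there is an `M ∈ ℕ`
such that `𝒫_𝔸^M` decides `CSP(𝔸)`: for every instance `I` of `CSP(𝔸)`,
`𝒫_𝔸^M(I) ⊢ G` iff `I` is unsatisfiable. -/
theorem statement17 {A : Type} [Finite A] (𝔸 : RelStruct A)
    (hfin : 𝔸.basic.Finite)
    (n : ℕ) (p : ℕ → A → A → A → A) (hp : IsHMChain n p)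
    (hpoly : ∀ k ≤ n, IsPolymorphism 𝔸 (ternaryOp (p k)))
    (hdual : ∃ w : ℕ, HasPathwidthDuality 𝔸 w) :
    ∃ M : ℕ, ∀ (V : Type) (I : Instance A V), IsCSPInstance 𝔸 I →
      (DerivesGoal 𝔸 M I ↔ ¬I.Satisfiable) := by
  classical
  obtain ⟨w, hw⟩ := hdual
  obtain ⟨M0, hM0⟩ := path_claim n (Nat.card A ^ (w + 1))
  obtain ⟨r0, hr0⟩ : ∃ r0, ∀ b ∈ 𝔸.basic, b.1 ≤ r0 := by
    obtain ⟨r0, hr0⟩ := (hfin.image (fun b => b.1)).bddAbove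
    exact ⟨r0, fun b hb => hr0 ⟨b, hb, rfl⟩⟩
  set r := 2 * (w + 1) + (w + 1) * M0 with hr
  refine ⟨2 * r + r0 + 1, fun V I hI => ⟨goal_sound, fun hun => ?_⟩⟩
  by_cases hV : Nonempty V
  · by_cases hA : Nonempty A
    · obtain ⟨a0⟩ := hA
      obtain ⟨W, J, h, hJ, hJun, ⟨m, U, hcov, hUf, hconv, hcon⟩, hJI⟩ := hw V I hI hun
      have hdv := unsat_dv a0 hp hpoly hM0 h hJ hJun hJI m
        (fun j => if hj : 1 ≤ j ∧ j ≤ m then (hUf ⟨j - 1, by omega⟩).1.toFinset else ∅)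
        (by simp) (by simp) ?_ ?_ ?_ ?_
      · exact goal_of_dv hfin (by omega) (fun b hb => (hr0 b hb).trans (by omega)) hI hdv
      · intro j
        split_ifs with hj
        · have h1 := (hUf ⟨j - 1, by omega⟩).2
          rwa [Set.ncard_eq_toFinset_card _ (hUf ⟨j - 1, by omega⟩).1] at h1
        · simp
      · intro v
        obtain ⟨i, hi⟩ := hcov v
        have := i.2
        refine ⟨i + 1, by omega, ?_⟩
        rw [dif_pos ⟨by omega, by omega⟩]
        simpa using hi
      · intro i q j hiq hqj v hvi hvj
        split_ifs at hvi with h1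
        · split_ifs at hvj with h2
          · rw [dif_pos ⟨by omega, by omega⟩]
            rw [Set.Finite.mem_toFinset] at hvi hvj ⊢
            exact hconv _ _ _ (by simp only [Fin.mk_le_mk]; omega)
              (by simp only [Fin.mk_le_mk]; omega) v hvi hvj
          · simp at hvj
        · simp at hvi
      · intro c hc
        obtain ⟨i, hi⟩ := hcon c hc
        have := i.2
        refine ⟨i + 1, by omega, fun t => ?_⟩
        rw [dif_pos ⟨by omega, by omega⟩]
        simpa using hi ⟨t, rfl⟩
    · obtain ⟨v0⟩ := hV
      let rule : Rule A 𝔸 (2 * r + r0 + 1) :=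
        { head := ⟨0, Fin.elim0, ∅⟩
          idb := none
          edb := []
          head_arity := Nat.zero_le _
          idb_arity := by simp
          edb_arity := by simp
          edb_basic := by simp
          nodup := List.nodup_nil
          consistent := fun f _ _ => (hA ⟨f 0⟩).elim
          mirror := by simp }
      exact ⟨0, _, Nat.zero_le _,
        Derives.step (I := I) rule (fun _ => v0) (by simp [rule]) (by simp [rule])⟩
  · have hex : ∃ c ∈ I.constraints, (fun i => (hV ⟨c.2.1 i⟩).elim) ∉ c.2.2 := by
      by_contra hno
      push Not at hno
      refine hun ⟨fun v => (hV ⟨v⟩).elim, fun c hc => ?_⟩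
      convert hno c hc
    obtain ⟨⟨k, σ, R⟩, hc, hcR⟩ := hex
    have hR : R = ∅ := by
      ext g
      simp only [Set.mem_empty_iff_false, iff_false]
      intro hg
      apply hcR
      convert hg using 1
      funext i
      exact (hV ⟨σ i⟩).elim
    subst hR
    exact ⟨k, σ, (hr0 _ (hI _ hc)).trans (by omega), Derives.base _ _ hc⟩

end CSPPaper
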